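/- Every triconnected planar simple graph with maximum degree at most 6 admits a planar octilinear drawing in which every edge has at most two bends. -/

import Mathlib

/-!
The drawing comes from a bipolar orientation. A triconnected graph has an st-numbering `f` for every
choice of a pole edge `{s, t}` (`OctiProof.exists_st_numbering`, by ear decomposition); orient all
edges upwards. The vertex `v` is drawn at a height proportional to `f v`, and each edge as a stub at
its lower end, a vertical segment, and a stub at its upper end, where a stub is horizontal, diagonal
or degenerate. Such an edge has at most two bends. What has to be found is a left-to-right order of
the vertical segments, and for every vertex an assignment of the eight directions (ports) to its
edges, compatible with this order.

The order is extracted from planarity without the Jordan curve theorem, by counting crossings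
modulo 2. Cut the given plane drawing into finitely many segments. For a closed mod-2 chain of
segments, the parity of the number of chain segments to the right of a point is constant along
segments outside the chain (`SegFam.bot_eq_top`), and near a vertex it is determined by the rotation
there. It vanishes along an edge `e0` through the rightmost segment at the lowest point of the
drawing, and `e0` is taken as the pole edge. This is the content of `Parity` and `exists_parity`.
Completing an edge `e` to a cycle by a descending path to `s`, an ascending path to `t`, and `e0`,
one says that `e` is left of `e'` if `e'` is inside this cycle. On edges whose level intervals
overlap this is a linear order, with all edges at a vertex on the same side of an edge passing that
vertex (`exists_edgeOrder`).

Ports: the incoming edges of a vertex are spread around its downward vertical port and the outgoing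
ones around its upward vertical port, in the order found before. As the degree is at most 6, the two
families do not compete for the same port. A compatible system of integer abscissas is built from
bottom to top, placing each vertex above its central incoming edge (`exists_coords`). When the
levels are far apart compared with the abscissas, stubs of different vertices lie in disjoint horizontal
bands and the drawing is planar (`exists_drawing`).
-/

/-!
Common definitions: polylines, octilinear drawings, planarity, triconnectivity.
-/

/-- A polyline: a sequence of `len + 1` points `pt 0, pt 1, …, pt len`,
consisting of `len ≥ 1` segments. (Values of `pt` beyond `len` are irrelevant.) -/
structure Polyline where
  len : ℕ
  len_pos : 1 ≤ len
  pt : ℕ → ℝ × ℝ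

namespace Polyline

/-- The number of bends of a polyline (its interior points `pt 1, …, pt (len-1)`). -/
def bends (P : Polyline) : ℕ := P.len - 1

/-- Piecewise-linear parametrization of the polyline on the interval `[0, len]`. -/
noncomputable def param (P : Polyline) (s : ℝ) : ℝ × ℝ :=
  P.pt ⌊s⌋.toNat + (s - (⌊s⌋.toNat : ℝ)) • (P.pt (⌊s⌋.toNat + 1) - P.pt ⌊s⌋.toNat)

/-- The image (trace) of the polyline in the plane. -/
noncomputable def image (P : Polyline) : Set (ℝ × ℝ) :=
  P.param '' Set.Icc 0 (P.len : ℝ)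

/-- The polyline is a simple curve. -/
def Simple (P : Polyline) : Prop :=
  Set.InjOn P.param (Set.Icc 0 (P.len : ℝ))

/-- Every segment is nondegenerate, and no two consecutive segments are collinear. -/
def Proper (P : Polyline) : Prop :=
  (∀ i < P.len, P.pt i ≠ P.pt (i + 1)) ∧
  (∀ i, i + 1 < P.len → ¬ Collinear ℝ ({P.pt i, P.pt (i + 1), P.pt (i + 2)} : Set (ℝ × ℝ)))

/-- The segment from `a` to `b` is horizontal, vertical, or diagonal at `45°`. -/
def OctiSeg (a b : ℝ × ℝ) : Prop :=
  b.2 - a.2 = 0 ∨ b.1 - a.1 = 0 ∨ b.2 - a.2 = b.1 - a.1 ∨ b.2 - a.2 = -(b.1 - a.1)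

/-- The polyline is octilinear: proper, with all segments in octilinear directions. -/
def Octilinear (P : Polyline) : Prop :=
  P.Proper ∧ ∀ i < P.len, OctiSeg (P.pt i) (P.pt (i + 1))

end Polyline

/-- Embedding of the integer grid into the real plane. -/
def toR (p : ℤ × ℤ) : ℝ × ℝ := ((p.1 : ℝ), (p.2 : ℝ))

/-- A polyline drawing of a simple graph `G` in the plane:
an injective placement of the vertices and, for each edge, a polyline whose
endpoints are the points of the edge's endvertices, with nondegenerate segments
and no two consecutive segments collinear. -/
structure PolyDrawing {V : Type*} (G : SimpleGraph V) where
  pos : V → ℝ × ℝ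
  inj : Function.Injective pos
  poly : Sym2 V → Polyline
  ends : ∀ u v, G.Adj u v →
    ({(poly s(u, v)).pt 0, (poly s(u, v)).pt (poly s(u, v)).len} : Set (ℝ × ℝ)) =
      {pos u, pos v}
  proper : ∀ e ∈ G.edgeSet, (poly e).Proper

/-- A polyline drawing is planar: every edge-polyline is a simple curve meeting the
vertex points exactly in its two endpoints, and polylines of distinct edges intersect
only in images of common endvertices. -/
def PolyDrawing.IsPlanar {V : Type*} {G : SimpleGraph V} (D : PolyDrawing G) : Prop :=
  (∀ e ∈ G.edgeSet, (D.poly e).Simple) ∧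
  (∀ u v, G.Adj u v →
    (D.poly s(u, v)).image ∩ Set.range D.pos = {D.pos u, D.pos v}) ∧
  (∀ e ∈ G.edgeSet, ∀ e' ∈ G.edgeSet, e ≠ e' →
    (D.poly e).image ∩ (D.poly e').image ⊆ D.pos '' {w | w ∈ e ∧ w ∈ e'})

/-- A simple graph is planar if it admits a planar polyline drawing in `ℝ²`. -/
def GraphPlanar {V : Type*} (G : SimpleGraph V) : Prop :=
  ∃ D : PolyDrawing G, D.IsPlanar

/-- An octilinear drawing of a simple graph `G`: vertices are placed injectively on the
integer grid and each edge is drawn as an octilinear polyline between its endvertices. -/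
structure OctiDrawing {V : Type*} (G : SimpleGraph V) where
  pos : V → ℤ × ℤ
  inj : Function.Injective pos
  poly : Sym2 V → Polyline
  ends : ∀ u v, G.Adj u v →
    ({(poly s(u, v)).pt 0, (poly s(u, v)).pt (poly s(u, v)).len} : Set (ℝ × ℝ)) =
      {toR (pos u), toR (pos v)}
  octi : ∀ e ∈ G.edgeSet, (poly e).Octilinear

/-- An octilinear drawing is planar: every edge-polyline is a simple curve meeting the
vertex points exactly in its two endpoints, and polylines of distinct edges intersect
only in images of common endvertices. -/
def OctiDrawing.IsPlanar {V : Type*} {G : SimpleGraph V} (D : OctiDrawing G) : Prop :=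
  (∀ e ∈ G.edgeSet, (D.poly e).Simple) ∧
  (∀ u v, G.Adj u v →
    (D.poly s(u, v)).image ∩ Set.range (fun w => toR (D.pos w)) =
      {toR (D.pos u), toR (D.pos v)}) ∧
  (∀ e ∈ G.edgeSet, ∀ e' ∈ G.edgeSet, e ≠ e' →
    (D.poly e).image ∩ (D.poly e').image ⊆
      (fun w => toR (D.pos w)) '' {w | w ∈ e ∧ w ∈ e'})

/-- The total number of bends of an octilinear drawing. -/
noncomputable def OctiDrawing.totalBends {V : Type*} [Fintype V] {G : SimpleGraph V}
    (D : OctiDrawing G) : ℕ :=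
  ∑ e ∈ G.edgeSet.toFinite.toFinset, (D.poly e).bends

/-- The union of the images of the polylines of a set `S` of edges. -/
noncomputable def edgesImage {V : Type*} {G : SimpleGraph V} (D : OctiDrawing G)
    (S : Set (Sym2 V)) : Set (ℝ × ℝ) :=
  ⋃ e ∈ S, (D.poly e).image

/-- The interior (in the drawing `D`) of the closed curve formed by the edges in `S`:
the union of the bounded connected components of the complement of the curve. -/
noncomputable def interiorOf {V : Type*} {G : SimpleGraph V} (D : OctiDrawing G)
    (S : Set (Sym2 V)) : Set (ℝ × ℝ) :=
  {z | z ∉ edgesImage D S ∧ Bornology.IsBounded (connectedComponentIn (edgesImage D S)ᶜ z)}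

/-- A graph is triconnected if it has at least `4` vertices and deleting
any at most `2` vertices leaves it connected. -/
def Triconnected {V : Type*} [Fintype V] (G : SimpleGraph V) : Prop :=
  4 ≤ Fintype.card V ∧ ∀ S : Set V, S.ncard ≤ 2 → (G.induce Sᶜ).Connected

/-- The maximum degree of `G` is at most `k`. -/
def MaxDegLE {V : Type*} (G : SimpleGraph V) (k : ℕ) : Prop :=
  ∀ v, (G.neighborSet v).ncard ≤ k

/-! ### Parity of crossings with a family of non-crossing segments -/

namespace OctiProof

open Finset Classical

/-- The mod-2 indicator of a proposition. -/
noncomputable def ind (p : Prop) : ZMod 2 := if p then 1 else 0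

theorem ind_true {p : Prop} (h : p) : ind p = 1 := if_pos h

theorem ind_false {p : Prop} (h : ¬ p) : ind p = 0 := if_neg h

theorem zmod2_add_self (a : ZMod 2) : a + a = 0 := CharTwo.add_self_eq_zero a

/-- A family of segments in general position: segment `i` is the graph of the affine function
`y ↦ m i * y + k i` over the height interval `[lo i, hi i]`.  Distinct nodes (segment endpoints)
have distinct heights, so a node is identified with its height; `px` gives its abscissa.
Two segments meet only in common endpoints. -/
structure SegFam (ι : Type*) where
  lo : ι → ℝ
  hi : ι → ℝ
  m : ι → ℝ
  k : ι → ℝ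
  px : ℝ → ℝ
  lt : ∀ i, lo i < hi i
  px_lo : ∀ i, m i * lo i + k i = px (lo i)
  px_hi : ∀ i, m i * hi i + k i = px (hi i)
  nc : ∀ i j y, i ≠ j → lo i ≤ y → y ≤ hi i → lo j ≤ y → y ≤ hi j →
    m i * y + k i = m j * y + k j → (y = lo i ∨ y = hi i) ∧ (y = lo j ∨ y = hi j)

namespace SegFam

variable {ι : Type*} (S : SegFam ι)

/-- The abscissa of the point of (the line through) segment `i` at height `y`. -/
noncomputable def X (i : ι) (y : ℝ) : ℝ := S.m i * y + S.k i

/-- Segment `z` lies to the right of segment `g` at some (equivalently, by `rt_iff`, every)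
height in the interior of their common height range. -/
def rt (g z : ι) : Prop :=
  ∃ y, S.lo g < y ∧ y < S.hi g ∧ S.lo z < y ∧ y < S.hi z ∧ S.X g y < S.X z y

theorem rt_irrefl (g : ι) : ¬ S.rt g g := by
  rintro ⟨y, _, _, _, _, h⟩
  exact lt_irrefl _ h

/-- Non-crossing segments do not change sides: the difference of abscissae cannot have opposite
signs at an interior height `a` and another common height `b`. -/
theorem no_flip {g z : ι} (hgz : g ≠ z) {a b : ℝ}
    (a1 : S.lo g < a) (a2 : a < S.hi g) (a3 : S.lo z < a) (a4 : a < S.hi z)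
    (b1 : S.lo g ≤ b) (b2 : b ≤ S.hi g) (b3 : S.lo z ≤ b) (b4 : b ≤ S.hi z)
    (h : (S.X z a - S.X g a) * (S.X z b - S.X g b) < 0) : False := by
  set P := S.X z a - S.X g a with hP
  set Q := S.X z b - S.X g b with hQ
  have hPQ : P - Q ≠ 0 := by
    intro h0
    have : P = Q := by linarith
    rw [this] at h
    nlinarith [mul_self_nonneg Q]
  -- the zero of the affine difference, at the fraction `s` of the way from `a` to `b`
  obtain ⟨s, hs⟩ : ∃ s, s = P / (P - Q) := ⟨_, rfl⟩
  have hs' : s * (P - Q) = P := by rw [hs]; field_simp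
  have s0 : 0 < s := by
    rcases lt_or_gt_of_ne hPQ with h1 | h1
    · have : P < 0 := by nlinarith
      rw [hs]; exact div_pos_of_neg_of_neg this h1
    · have : 0 < P := by nlinarith
      rw [hs]; positivity
  have s1 : s < 1 := by
    rcases lt_or_gt_of_ne hPQ with h1 | h1
    · have : 0 < Q := by nlinarith
      rw [hs, div_lt_one_of_neg h1]; linarith
    · have : Q < 0 := by nlinarith
      rw [hs, div_lt_one h1]; linarith
  have key := S.nc g z (a + s * (b - a)) hgz (by nlinarith) (by nlinarith) (by nlinarith)
    (by nlinarith) (by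
      have : S.X z a - S.X g a - s * (P - Q) = 0 := by rw [hs', hP]; ring
      rw [hP, hQ] at this
      simp only [X] at this
      nlinarith)
  rcases key.1 with h1 | h1 <;> nlinarith

theorem ne_of_interior {g z : ι} (hgz : g ≠ z) {y : ℝ}
    (b1 : S.lo g ≤ y) (b2 : y ≤ S.hi g) (b3 : S.lo z ≤ y) (b4 : y ≤ S.hi z)
    (h : (S.lo g < y ∧ y < S.hi g) ∨ (S.lo z < y ∧ y < S.hi z)) : S.X g y ≠ S.X z y := by
  intro he
  have := S.nc g z y hgz b1 b2 b3 b4 he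
  rcases h with ⟨h1, h2⟩ | ⟨h1, h2⟩
  · rcases this.1 with h3 | h3 <;> linarith
  · rcases this.2 with h3 | h3 <;> linarith

/-- The side on which `z` lies can be read off at any common height at which the two abscissae
differ, endpoints included. -/
theorem rt_iff {g z : ι} (hgz : g ≠ z) {y : ℝ}
    (b1 : S.lo g ≤ y) (b2 : y ≤ S.hi g) (b3 : S.lo z ≤ y) (b4 : y ≤ S.hi z)
    (o1 : S.lo g < S.hi z) (o2 : S.lo z < S.hi g) (hne : S.X g y ≠ S.X z y) :
    S.rt g z ↔ S.X g y < S.X z y := by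
  constructor
  · rintro ⟨a, a1, a2, a3, a4, ha⟩
    by_contra hlt
    have : S.X z y < S.X g y := lt_of_le_of_ne (not_lt.1 hlt) hne.symm
    exact S.no_flip hgz a1 a2 a3 a4 b1 b2 b3 b4
      (mul_neg_of_pos_of_neg (by linarith) (by linarith))
  · intro hlt
    have hmax : max (S.lo g) (S.lo z) < min (S.hi g) (S.hi z) :=
      max_lt (lt_min (S.lt g) o1) (lt_min o2 (S.lt z))
    obtain ⟨a, ha1, ha2⟩ := exists_between hmax
    rw [max_lt_iff] at ha1
    rw [lt_min_iff] at ha2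
    refine ⟨a, ha1.1, ha2.1, ha1.2, ha2.2, ?_⟩
    by_contra hn
    have h1 := S.ne_of_interior hgz ha1.1.le ha2.1.le ha1.2.le ha2.2.le (Or.inl ⟨ha1.1, ha2.1⟩)
    have : S.X z a < S.X g a := lt_of_le_of_ne (not_lt.1 hn) h1.symm
    exact S.no_flip hgz ha1.1 ha2.1 ha1.2 ha2.2 b1 b2 b3 b4
      (mul_neg_of_neg_of_pos (by linarith) (by linarith))

variable [Fintype ι]

/-- A mod-2 chain of segments without boundary, expressed by duality: every function on nodes
sums to zero over the endpoints of the chain. -/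
def Cyc (Z : ι → ZMod 2) : Prop :=
  ∀ F : ℝ → ZMod 2, ∑ z, Z z * (F (S.lo z) + F (S.hi z)) = 0

/-- The parity of the number of segments of `Z` to the right of `g`, just above its lower end. -/
noncomputable def bot (Z : ι → ZMod 2) (g : ι) : ZMod 2 :=
  ∑ z, Z z * ind (S.lo z ≤ S.lo g ∧ S.lo g < S.hi z ∧ S.rt g z)

/-- The parity of the number of segments of `Z` to the right of `g`, just below its upper end. -/
noncomputable def top (Z : ι → ZMod 2) (g : ι) : ZMod 2 :=
  ∑ z, Z z * ind (S.lo z < S.hi g ∧ S.hi g ≤ S.hi z ∧ S.rt g z)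

/-- The parity of the number of segments of `Z` passing strictly to the right of the node `y`. -/
noncomputable def nodeVal (Z : ι → ZMod 2) (y : ℝ) : ZMod 2 :=
  ∑ z, Z z * ind (S.lo z < y ∧ y < S.hi z ∧ S.px y < S.X z y)

/-- The crossing parity of a closed chain is constant along a segment outside the chain. -/
theorem bot_eq_top {Z : ι → ZMod 2} (hZ : S.Cyc Z) {g : ι} (hg : Z g = 0) :
    S.bot Z g = S.top Z g := by
  have hF := hZ (fun y => ind (S.lo g < y ∧ y < S.hi g ∧ S.X g y < S.px y))
  have key : ∀ z, Z z * ind (S.lo z ≤ S.lo g ∧ S.lo g < S.hi z ∧ S.rt g z) +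
      Z z * ind (S.lo z < S.hi g ∧ S.hi g ≤ S.hi z ∧ S.rt g z) =
      Z z * (ind (S.lo g < S.lo z ∧ S.lo z < S.hi g ∧ S.X g (S.lo z) < S.px (S.lo z)) +
        ind (S.lo g < S.hi z ∧ S.hi z < S.hi g ∧ S.X g (S.hi z) < S.px (S.hi z))) := by
    intro z
    by_cases hzg : g = z
    · subst hzg; simp [hg]
    rw [← mul_add]
    congr 1
    by_cases ho : S.lo g < S.hi z ∧ S.lo z < S.hi g
    · obtain ⟨o1, o2⟩ := ho
      have e1 : S.lo g < S.lo z → (S.X g (S.lo z) < S.px (S.lo z) ↔ S.rt g z) := by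
        intro h
        rw [← S.px_lo z]
        exact (S.rt_iff hzg h.le o2.le le_rfl (S.lt z).le o1 o2
          (S.ne_of_interior hzg h.le o2.le le_rfl (S.lt z).le (Or.inl ⟨h, o2⟩))).symm
      have e2 : S.hi z < S.hi g → (S.X g (S.hi z) < S.px (S.hi z) ↔ S.rt g z) := by
        intro h
        rw [← S.px_hi z]
        exact (S.rt_iff hzg o1.le h.le (S.lt z).le le_rfl o1 o2
          (S.ne_of_interior hzg o1.le h.le (S.lt z).le le_rfl (Or.inl ⟨o1, h⟩))).symm
      by_cases hr : S.rt g z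
      · rcases lt_or_ge (S.lo g) (S.lo z) with h1 | h1 <;>
        rcases lt_or_ge (S.hi z) (S.hi g) with h2 | h2
        · have f1 := (e1 h1).2 hr
          have f2 := (e2 h2).2 hr
          simp only [ind, f1, f2, h1, h2, o1, o2, hr, not_le.2 h1, not_le.2 h2]; decide
        · have f1 := (e1 h1).2 hr
          simp only [ind, f1, h1, h2, o1, o2, hr, not_le.2 h1, not_lt.2 h2]; simp
        · have f2 := (e2 h2).2 hr
          simp only [ind, f2, h1, h2, o1, o2, hr, not_lt.2 h1, not_le.2 h2]; simp
        · simp only [ind, h1, h2, o1, o2, hr, not_lt.2 h1, not_lt.2 h2,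
            true_and, false_and, and_false, if_true, if_false]; decide
      · rw [ind_false (fun h => hr h.2.2), ind_false (fun h => hr h.2.2),
          ind_false (fun h => hr ((e1 h.1).1 h.2.2)), ind_false (fun h => hr ((e2 h.2.1).1 h.2.2))]
    · have hr : ¬ S.rt g z := by
        rintro ⟨y, h1, h2, h3, h4, _⟩
        exact ho ⟨by linarith, by linarith⟩
      have := S.lt z
      rw [ind_false (fun h => hr h.2.2), ind_false (fun h => hr h.2.2),
        ind_false (fun h => ho ⟨by linarith [h.1], h.2.1⟩),
        ind_false (fun h => ho ⟨h.1, by linarith [h.2.1]⟩)]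
  have hsum : S.bot Z g + S.top Z g = 0 := by
    rw [bot, top, ← Finset.sum_add_distrib, Finset.sum_congr rfl (fun z _ => key z)]
    exact hF
  calc S.bot Z g = S.bot Z g + (S.top Z g + S.top Z g) := by rw [zmod2_add_self, add_zero]
    _ = S.top Z g := by rw [← add_assoc, hsum, zero_add]

/-- The count just above the lower end of `g`, split into the segments passing strictly to the right
of that node and those starting at it. -/
theorem bot_eq_node (Z : ι → ZMod 2) (g : ι) :
    S.bot Z g = S.nodeVal Z (S.lo g) + ∑ z, Z z * ind (S.lo z = S.lo g ∧ S.rt g z) := by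
  rw [bot, nodeVal, ← Finset.sum_add_distrib]
  refine Finset.sum_congr rfl (fun z _ => ?_)
  rw [← mul_add]
  congr 1
  have hz := S.lt z
  have hg := S.lt g
  by_cases hzg : g = z
  · subst hzg
    simp [ind, S.rt_irrefl]
  rcases lt_trichotomy (S.lo z) (S.lo g) with h | h | h
  · by_cases h2 : S.lo g < S.hi z
    · have := S.rt_iff hzg (y := S.lo g) le_rfl hg.le h.le h2.le h2 (h.trans hg)
        (S.ne_of_interior hzg le_rfl hg.le h.le h2.le (Or.inr ⟨h, h2⟩))
      rw [show S.X g (S.lo g) = S.px (S.lo g) from S.px_lo g] at this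
      simp [ind, h, h2, h.le, h.ne, this]
    · simp [ind, h2, h.ne]
  · have : S.lo g < S.hi z := h ▸ hz
    simp [ind, h, this]
  · simp [ind, not_le.2 h, not_lt.2 h.le, h.ne']

theorem top_eq_node (Z : ι → ZMod 2) (g : ι) :
    S.top Z g = S.nodeVal Z (S.hi g) + ∑ z, Z z * ind (S.hi z = S.hi g ∧ S.rt g z) := by
  rw [top, nodeVal, ← Finset.sum_add_distrib]
  refine Finset.sum_congr rfl (fun z _ => ?_)
  rw [← mul_add]
  congr 1
  have hz := S.lt z
  have hg := S.lt g
  by_cases hzg : g = z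
  · subst hzg
    simp [ind, S.rt_irrefl]
  rcases lt_trichotomy (S.hi g) (S.hi z) with h | h | h
  · by_cases h2 : S.lo z < S.hi g
    · have := S.rt_iff hzg (y := S.hi g) hg.le le_rfl h2.le h.le (hg.trans h) h2
        (S.ne_of_interior hzg hg.le le_rfl h2.le h.le (Or.inr ⟨h2, h⟩))
      rw [show S.X g (S.hi g) = S.px (S.hi g) from S.px_hi g] at this
      simp [ind, h, h2, h.le, h.ne', this]
    · simp [ind, h2, h.ne']
  · simp [ind, h, hz]
  · simp [ind, not_le.2 h, not_lt.2 h.le, h.ne]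

end SegFam

end OctiProof

namespace OctiProof

open Finset Classical

namespace SegFam

variable {ι : Type*} (S : SegFam ι)

/-- Segments going up from a common node are ordered by their slopes. -/
theorem rt_of_lo {g z : ι} (hgz : g ≠ z) (h : S.lo g = S.lo z) :
    S.m g ≠ S.m z ∧ (S.rt g z ↔ S.m g < S.m z) := by
  have hg := S.lt g
  have hz := S.lt z
  obtain ⟨y, hy1, hy2⟩ := exists_between (lt_min hg (h ▸ hz))
  rw [lt_min_iff] at hy2
  have hne := S.ne_of_interior hgz hy1.le hy2.1.le (h ▸ hy1.le) hy2.2.le (Or.inl ⟨hy1, hy2.1⟩)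
  have e1 := S.px_lo g
  have e2 := S.px_lo z
  rw [← h] at e2
  have hX : S.X z y - S.X g y = (S.m z - S.m g) * (y - S.lo g) := by
    simp only [X]; linear_combination e2 - e1
  rw [S.rt_iff hgz hy1.le hy2.1.le (h ▸ hy1.le) hy2.2.le (h ▸ hz) (h ▸ hg) hne]
  refine ⟨fun hm => hne ?_, ?_⟩
  · rw [hm, sub_self, zero_mul] at hX; linarith
  · rw [← sub_pos, hX, ← sub_pos (a := S.m z)]
    exact mul_pos_iff_of_pos_right (by linarith)

/-- Segments going down from a common node are ordered by their slopes, reversed. -/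
theorem rt_of_hi {g z : ι} (hgz : g ≠ z) (h : S.hi g = S.hi z) :
    S.m g ≠ S.m z ∧ (S.rt g z ↔ S.m z < S.m g) := by
  have hg := S.lt g
  have hz := S.lt z
  obtain ⟨y, hy1, hy2⟩ := exists_between (max_lt hg (h ▸ hz))
  rw [max_lt_iff] at hy1
  have hne := S.ne_of_interior hgz hy1.1.le hy2.le hy1.2.le (h ▸ hy2.le) (Or.inl ⟨hy1.1, hy2⟩)
  have e1 := S.px_hi g
  have e2 := S.px_hi z
  rw [← h] at e2
  have hX : S.X z y - S.X g y = (S.m g - S.m z) * (S.hi g - y) := by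
    simp only [X]; linear_combination e2 - e1
  rw [S.rt_iff hgz hy1.1.le hy2.le hy1.2.le (h ▸ hy2.le) (h ▸ hg) (h ▸ hz) hne]
  refine ⟨fun hm => hne ?_, ?_⟩
  · rw [hm, sub_self, zero_mul] at hX; linarith
  · rw [← sub_pos, hX, ← sub_pos (a := S.m g)]
    exact mul_pos_iff_of_pos_right (by linarith)

variable [Fintype ι]

/-- The parity of `Z` to the right of `g` near its endpoint at height `y` (by convention the upper
endpoint, if `y` is not the height of an endpoint). -/
noncomputable def endVal (Z : ι → ZMod 2) (g : ι) (y : ℝ) : ZMod 2 :=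
  if y = S.lo g then S.bot Z g else S.top Z g

theorem endVal_eq (Z : ι → ZMod 2) (g : ι) {y : ℝ} (hy : y = S.lo g ∨ y = S.hi g) :
    S.endVal Z g y = S.nodeVal Z y +
      ∑ z, Z z * ind ((y = S.lo z ∨ y = S.hi z) ∧ (S.lo g = y ↔ S.lo z = y) ∧ S.rt g z) := by
  have hg := S.lt g
  by_cases h : y = S.lo g
  · rw [endVal, if_pos h, S.bot_eq_node, ← h]
    congr 1
    refine Finset.sum_congr rfl (fun z _ => ?_)
    congr 2
    simp only [eq_iff_iff]
    constructor
    · rintro ⟨h1, h2⟩; exact ⟨Or.inl h1.symm, by simp [h1], h2⟩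
    · rintro ⟨_, h1, h2⟩; exact ⟨by simpa using h1, h2⟩
  · have h' := hy.resolve_left h
    rw [endVal, if_neg h, S.top_eq_node, ← h']
    congr 1
    refine Finset.sum_congr rfl (fun z _ => ?_)
    have hz := S.lt z
    congr 2
    simp only [eq_iff_iff]
    constructor
    · rintro ⟨h1, h2⟩
      exact ⟨Or.inr h1.symm, by constructor <;> intro <;> linarith, h2⟩
    · rintro ⟨h0, h1, h2⟩
      refine ⟨?_, h2⟩
      rcases h0 with h0 | h0
      · exact absurd (h1.2 h0.symm).symm h
      · exact h0.symm

/-- Near a node not met by `Z`, the parity does not depend on the segment. -/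
theorem endVal_eq_nodeVal (Z : ι → ZMod 2) (g : ι) {y : ℝ} (hy : y = S.lo g ∨ y = S.hi g)
    (hZ : ∀ z, (y = S.lo z ∨ y = S.hi z) → Z z = 0) : S.endVal Z g y = S.nodeVal Z y := by
  rw [S.endVal_eq Z g hy, Finset.sum_eq_zero, add_zero]
  intro z _
  by_cases h : y = S.lo z ∨ y = S.hi z
  · rw [hZ z h, zero_mul]
  · rw [ind_false (fun h' => h h'.1), mul_zero]

/-- The crossing parity of a closed chain agrees at the two ends of a segment outside the chain. -/
theorem endVal_ends {Z : ι → ZMod 2} (hZ : S.Cyc Z) {g : ι} (hg : Z g = 0) (y y' : ℝ) :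
    S.endVal Z g y = S.endVal Z g y' := by
  have := S.bot_eq_top hZ hg
  unfold endVal
  split_ifs <;> simp [this]

end SegFam

/-- Finitely many points get distinct heights after a suitable shear. -/
theorem exists_generic_height (A : Set (ℝ × ℝ)) (hA : A.Finite) :
    ∃ θ : ℝ, Set.InjOn (fun p : ℝ × ℝ => p.2 + θ * p.1) A := by
  -- two points of equal height determine `θ`
  have hfin : ((fun q : (ℝ × ℝ) × (ℝ × ℝ) => -(q.1.2 - q.2.2) / (q.1.1 - q.2.1)) '' (A ×ˢ A)).Finite :=
    (hA.prod hA).image _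
  obtain ⟨θ, hθ⟩ := hfin.exists_notMem
  refine ⟨θ, fun p hp q hq h => ?_⟩
  simp only at h
  by_cases h1 : p.1 = q.1
  · rw [h1] at h
    exact Prod.ext h1 (by linarith)
  · exfalso
    apply hθ
    refine ⟨(p, q), ⟨hp, hq⟩, ?_⟩
    have : p.1 - q.1 ≠ 0 := sub_ne_zero.2 h1
    simp only
    field_simp
    linarith

/-- A family of segments in the plane meeting only in common endpoints, seen through the generic
height `p ↦ p.2 + θ * p.1`, is a `SegFam`. -/
theorem exists_segFam {ι : Type*} (A B : ι → ℝ × ℝ) (θ : ℝ) (Nd : Set (ℝ × ℝ))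
    (hA : ∀ i, A i ∈ Nd) (hB : ∀ i, B i ∈ Nd) (hAB : ∀ i, A i ≠ B i)
    (hinj : Set.InjOn (fun p : ℝ × ℝ => p.2 + θ * p.1) Nd)
    (hnc : ∀ i j p, i ≠ j → p ∈ segment ℝ (A i) (B i) → p ∈ segment ℝ (A j) (B j) →
      (p = A i ∨ p = B i) ∧ (p = A j ∨ p = B j)) :
    ∃ S : SegFam ι, (∀ i, S.lo i = min ((A i).2 + θ * (A i).1) ((B i).2 + θ * (B i).1)) ∧
      (∀ i, S.hi i = max ((A i).2 + θ * (A i).1) ((B i).2 + θ * (B i).1)) := by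
  set h : ℝ × ℝ → ℝ := fun p => p.2 + θ * p.1 with hh
  have hne : ∀ i, h (A i) ≠ h (B i) := fun i e => hAB i (hinj (hA i) (hB i) e)
  have hne' : ∀ i, h (B i) - h (A i) ≠ 0 := fun i => sub_ne_zero.2 (hne i).symm
  -- abscissa of a node as a function of its height
  obtain ⟨px, hpx⟩ : ∃ px : ℝ → ℝ, ∀ p ∈ Nd, px (h p) = p.1 := by
    refine ⟨fun y => if hy : ∃ p ∈ Nd, h p = y then (Classical.choose hy).1 else 0, ?_⟩
    intro p hp
    have hy : ∃ q ∈ Nd, h q = h p := ⟨p, hp, rfl⟩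
    simp only [dif_pos hy]
    have := Classical.choose_spec hy
    rw [hinj this.1 hp this.2]
  let m : ι → ℝ := fun i => ((B i).1 - (A i).1) / (h (B i) - h (A i))
  let k : ι → ℝ := fun i => (A i).1 - m i * h (A i)
  have mA : ∀ i, m i * h (A i) + k i = (A i).1 := fun i => by simp only [k]; ring
  have mB : ∀ i, m i * h (B i) + k i = (B i).1 := fun i => by
    have := hne' i
    simp only [k, m]; field_simp; ring
  have minAB : ∀ i, min (h (A i)) (h (B i)) = h (A i) ∨ min (h (A i)) (h (B i)) = h (B i) :=
    fun i => min_choice _ _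
  have maxAB : ∀ i, max (h (A i)) (h (B i)) = h (A i) ∨ max (h (A i)) (h (B i)) = h (B i) :=
    fun i => max_choice _ _
  have mem : ∀ i y, min (h (A i)) (h (B i)) ≤ y → y ≤ max (h (A i)) (h (B i)) →
      (m i * y + k i, y - θ * (m i * y + k i)) ∈ segment ℝ (A i) (B i) := by
    intro i y h1 h2
    rw [segment_eq_image_lineMap]
    obtain ⟨t, ht⟩ : ∃ t, t = (y - h (A i)) / (h (B i) - h (A i)) := ⟨_, rfl⟩
    have ht' : t * (h (B i) - h (A i)) = y - h (A i) := by
      rw [ht]; exact div_mul_cancel₀ _ (hne' i)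
    refine ⟨t, ?_, ?_⟩
    · rcases lt_or_gt_of_ne (hne i) with hlt | hlt
      · rw [min_eq_left hlt.le] at h1
        rw [max_eq_right hlt.le] at h2
        constructor
        · rw [ht]; exact div_nonneg (by linarith) (by linarith)
        · rw [ht]; exact (div_le_one (by linarith)).2 (by linarith)
      · rw [min_eq_right hlt.le] at h1
        rw [max_eq_left hlt.le] at h2
        constructor
        · rw [ht]; exact div_nonneg_of_nonpos (by linarith) (by linarith)
        · rw [ht]; exact (div_le_one_of_neg (by linarith)).2 (by linarith)
    · have hx : m i * y + k i = (A i).1 + t * ((B i).1 - (A i).1) := by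
        have : y = h (A i) + t * (h (B i) - h (A i)) := by linarith
        rw [this]
        linear_combination (1 - t) * mA i + t * mB i
      rw [AffineMap.lineMap_apply, hx]
      simp only [hh] at ht'
      refine Prod.ext ?_ ?_
      · simp; ring
      · simp; linear_combination ht'
  refine ⟨⟨fun i => min (h (A i)) (h (B i)), fun i => max (h (A i)) (h (B i)), m, k, px,
    fun i => min_lt_max.2 (hne i), fun i => ?_, fun i => ?_, ?_⟩, fun i => rfl, fun i => rfl⟩
  · rcases minAB i with e | e <;> rw [e]
    · rw [mA, hpx _ (hA i)]
    · rw [mB, hpx _ (hB i)]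
  · rcases maxAB i with e | e <;> rw [e]
    · rw [mA, hpx _ (hA i)]
    · rw [mB, hpx _ (hB i)]
  · intro i j y hij a1 a2 b1 b2 he
    have p1 := mem i y a1 a2
    have p2 := mem j y b1 b2
    rw [← he] at p2
    have hy : h (m i * y + k i, y - θ * (m i * y + k i)) = y := by simp only [hh]; ring
    have key := hnc i j _ hij p1 p2
    have ends : ∀ l, ((m i * y + k i, y - θ * (m i * y + k i)) = A l ∨
        (m i * y + k i, y - θ * (m i * y + k i)) = B l) →
        (y = min (h (A l)) (h (B l)) ∨ y = max (h (A l)) (h (B l))) := by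
      intro l hl
      have : y = h (A l) ∨ y = h (B l) := by
        rcases hl with e | e
        · left; rw [← e, hy]
        · right; rw [← e, hy]
      rcases le_total (h (A l)) (h (B l)) with g | g
      · rw [min_eq_left g, max_eq_right g]; exact this
      · rw [min_eq_right g, max_eq_left g]; exact this.symm
    exact ⟨ends i key.1, ends j key.2⟩

end OctiProof

/-! ### Polylines as unions of segments -/

namespace OctiProof

open Finset Classical

theorem param_add (P : Polyline) (i : ℕ) {t : ℝ} (h0 : 0 ≤ t) (h1 : t ≤ 1) :
    P.param (i + t) = P.pt i + t • (P.pt (i + 1) - P.pt i) := by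
  rcases h1.lt_or_eq with h1 | h1
  · have : ⌊(i : ℝ) + t⌋ = (i : ℤ) := by
      rw [Int.floor_eq_iff]; push_cast; constructor <;> linarith
    simp [Polyline.param, this]
  · subst h1
    have : ⌊(i : ℝ) + 1⌋ = ((i + 1 : ℕ) : ℤ) := by
      rw [Int.floor_eq_iff]; push_cast; constructor <;> linarith
    simp only [Polyline.param, this, Int.toNat_natCast]
    push_cast
    simp

theorem param_nat (P : Polyline) (i : ℕ) : P.param i = P.pt i := by
  have := param_add P i (t := 0) le_rfl zero_le_one
  simpa using this

theorem mem_seg_iff (P : Polyline) (i : ℕ) (p : ℝ × ℝ) :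
    p ∈ segment ℝ (P.pt i) (P.pt (i + 1)) ↔ ∃ t, 0 ≤ t ∧ t ≤ 1 ∧ P.param (i + t) = p := by
  rw [segment_eq_image']
  constructor
  · rintro ⟨t, ⟨h0, h1⟩, rfl⟩
    exact ⟨t, h0, h1, param_add P i h0 h1⟩
  · rintro ⟨t, h0, h1, rfl⟩
    exact ⟨t, ⟨h0, h1⟩, (param_add P i h0 h1).symm⟩

theorem mem_Icc_len (P : Polyline) {i : ℕ} (hi : i < P.len) {t : ℝ} (h0 : 0 ≤ t) (h1 : t ≤ 1) :
    (i : ℝ) + t ∈ Set.Icc (0 : ℝ) P.len := by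
  have : (i : ℝ) + 1 ≤ P.len := by exact_mod_cast hi
  exact ⟨by positivity, by linarith⟩

theorem exists_split (P : Polyline) {s : ℝ} (hs : s ∈ Set.Icc (0 : ℝ) P.len) :
    ∃ i : ℕ, i < P.len ∧ ∃ t : ℝ, 0 ≤ t ∧ t ≤ 1 ∧ s = i + t := by
  have hl := P.len_pos
  rcases hs.2.lt_or_eq with h | h
  · refine ⟨⌊s⌋₊, (Nat.floor_lt hs.1).2 h, s - ⌊s⌋₊, ?_, ?_, by ring⟩
    · linarith [Nat.floor_le hs.1]
    · linarith [Nat.lt_floor_add_one s]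
  · refine ⟨P.len - 1, by omega, 1, by norm_num, le_rfl, ?_⟩
    rw [h, Nat.cast_sub hl]; simp

theorem mem_image_iff (P : Polyline) (p : ℝ × ℝ) :
    p ∈ P.image ↔ ∃ i < P.len, p ∈ segment ℝ (P.pt i) (P.pt (i + 1)) := by
  constructor
  · rintro ⟨s, hs, rfl⟩
    obtain ⟨i, hi, t, h0, h1, rfl⟩ := exists_split P hs
    exact ⟨i, hi, (mem_seg_iff P i _).2 ⟨t, h0, h1, rfl⟩⟩
  · rintro ⟨i, hi, hp⟩
    obtain ⟨t, h0, h1, rfl⟩ := (mem_seg_iff P i p).1 hp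
    exact ⟨_, mem_Icc_len P hi h0 h1, rfl⟩

theorem pt_mem_image (P : Polyline) {k : ℕ} (hk : k ≤ P.len) : P.pt k ∈ P.image :=
  ⟨k, ⟨by positivity, by exact_mod_cast hk⟩, param_nat P k⟩

/-- A division point of a simple polyline lies only on the adjacent segments. -/
theorem simple_pt_mem {P : Polyline} (hP : P.Simple) {i k : ℕ} (hi : i < P.len) (hk : k ≤ P.len)
    (h : P.pt k ∈ segment ℝ (P.pt i) (P.pt (i + 1))) : k = i ∨ k = i + 1 := by
  obtain ⟨t, h0, h1, he⟩ := (mem_seg_iff P i _).1 h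
  rw [← param_nat] at he
  have := hP (mem_Icc_len P hi h0 h1) ⟨by positivity, by exact_mod_cast hk⟩ he
  have a : (i : ℝ) ≤ k := by linarith
  have b : (k : ℝ) ≤ ((i + 1 : ℕ) : ℝ) := by push_cast; linarith
  have a' : i ≤ k := by exact_mod_cast a
  have b' : k ≤ i + 1 := by exact_mod_cast b
  omega

theorem simple_pt_inj {P : Polyline} (hP : P.Simple) {i k : ℕ} (hi : i ≤ P.len) (hk : k ≤ P.len)
    (h : P.pt i = P.pt k) : i = k := by
  rw [← param_nat, ← param_nat] at h
  have := hP ⟨by positivity, by exact_mod_cast hi⟩ ⟨by positivity, by exact_mod_cast hk⟩ h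
  exact_mod_cast this

/-- Two segments of a simple polyline meet only if they are consecutive, and then in the common
division point. -/
theorem simple_seg_inter {P : Polyline} (hP : P.Simple) {i j : ℕ} (hij : i < j) (hj : j < P.len)
    {p : ℝ × ℝ} (h1 : p ∈ segment ℝ (P.pt i) (P.pt (i + 1)))
    (h2 : p ∈ segment ℝ (P.pt j) (P.pt (j + 1))) : p = P.pt (i + 1) ∧ j = i + 1 := by
  obtain ⟨t, t0, t1, ht⟩ := (mem_seg_iff P i _).1 h1
  obtain ⟨u, u0, u1, hu⟩ := (mem_seg_iff P j _).1 h2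
  have := hP (mem_Icc_len P (hij.trans hj) t0 t1) (mem_Icc_len P hj u0 u1) (ht.trans hu.symm)
  have hij' : (i : ℝ) + 1 ≤ j := by exact_mod_cast hij
  have e1 : (j : ℝ) = ((i + 1 : ℕ) : ℝ) := by push_cast; linarith
  have e2 : j = i + 1 := by exact_mod_cast e1
  refine ⟨?_, e2⟩
  have : t = 1 := by push_cast at e1; linarith
  rw [← ht, this, ← param_nat]; push_cast; rfl

end OctiProof

/-! ### The parity data of a plane graph -/

namespace OctiProof

open Finset Classical

/-- A mod-2 edge chain without boundary, expressed by duality with functions on vertices. -/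
def ECyc {V E : Type*} [Fintype E] (src tgt : E → V) (c : E → ZMod 2) : Prop :=
  ∀ F : V → ZMod 2, ∑ e, c e * (F (src e) + F (tgt e)) = 0

/-- The parity of the chain `c` to the right of the edge `e` near its endpoint `v`: `N v e'` counts
the crossings of `e'` with the rightward ray from `v`, and the second term counts the edges of `c`
at `v` that leave `v` on the same side (up or down) as `e`, to the right of `e`. -/
noncomputable def pval {V E : Type*} [Fintype E] (src tgt : E → V) (N : V → E → ZMod 2)
    (up : V → E → Prop) (slope : V → E → ℝ) (c : E → ZMod 2) (v : V) (e : E) : ZMod 2 :=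
  ∑ e', c e' * (N v e' + ind ((v = src e' ∨ v = tgt e') ∧ (up v e ↔ up v e') ∧
    slope v e < slope v e'))

/-- What is used of planarity: crossing parities of cycles are computed locally at vertices
(`pval`), are constant along edges off the cycle, and vanish on the outer edge `e0`. -/
structure Parity {V E : Type*} [Fintype E] (src tgt : E → V) (e0 : E) where
  N : V → E → ZMod 2
  up : V → E → Prop
  slope : V → E → ℝ
  slope_ne : ∀ v e e', e ≠ e' → (v = src e ∨ v = tgt e) → (v = src e' ∨ v = tgt e') →
    (up v e ↔ up v e') → slope v e ≠ slope v e'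
  const : ∀ c, ECyc src tgt c → ∀ e, c e = 0 →
    pval src tgt N up slope c (src e) e = pval src tgt N up slope c (tgt e) e
  outer : ∀ c, ECyc src tgt c → c e0 = 0 → ∀ v, (v = src e0 ∨ v = tgt e0) →
    pval src tgt N up slope c v e0 = 0

theorem telescope (n : ℕ) (g : ℕ → ZMod 2) :
    ∑ i : Fin n, (g i + g (i + 1)) = g 0 + g n := by
  rw [Fin.sum_univ_eq_sum_range (fun i => g i + g (i + 1)) n]
  induction n with
  | zero => simp [zmod2_add_self]
  | succ n ih =>
    rw [Finset.sum_range_succ, ih]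
    linear_combination zmod2_add_self (g n)

/-- Every plane graph with an edge carries parity data.  The edge polylines are cut into segments,
which form a `SegFam` for a generic height; parities are propagated from segment to segment along an
edge.  The edge `e0` contains the rightmost segment at the lowest node: nothing lies to the right of
that segment near this node, so every parity seen from it vanishes. -/
theorem exists_parity {V : Type*} [Fintype V] (G : SimpleGraph V) [Fintype G.edgeSet]
    (hp : GraphPlanar G) (hne : Nonempty G.edgeSet) :
    ∃ e0 : G.edgeSet, ∀ src tgt : G.edgeSet → V, (∀ e, e.1 = s(src e, tgt e)) →
      Nonempty (Parity src tgt e0) := by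
  obtain ⟨D, hs, hv, hc⟩ := hp
  let P : G.edgeSet → Polyline := fun e => D.poly e.1
  have hor : ∀ e : G.edgeSet, ∃ a b, e.1 = s(a, b) ∧ (P e).pt 0 = D.pos a ∧
      (P e).pt (P e).len = D.pos b := by
    rintro ⟨e, he⟩
    induction e using Sym2.ind with
    | _ u v =>
      have := D.ends u v he
      rw [Set.pair_eq_pair_iff] at this
      rcases this with ⟨h1, h2⟩ | ⟨h1, h2⟩
      · exact ⟨u, v, rfl, h1, h2⟩
      · exact ⟨v, u, Sym2.eq_swap, h1, h2⟩
  choose a b hab hpa hpb using hor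
  have vmem : ∀ (v : V) (e : G.edgeSet), v ∈ e.1 ↔ v = a e ∨ v = b e := fun v e => by
    rw [hab e, Sym2.mem_iff]
  have adj : ∀ e, G.Adj (a e) (b e) := fun e => by
    have := e.2; rw [hab e] at this; exact this
  have hS : ∀ e, (P e).Simple := fun e => hs e.1 e.2
  have key1 : ∀ e v, D.pos v ∈ (P e).image → v = a e ∨ v = b e := by
    intro e v h
    have h2 := hv (a e) (b e) (adj e)
    rw [← hab e] at h2
    have : D.pos v ∈ ({D.pos (a e), D.pos (b e)} : Set (ℝ × ℝ)) := by
      rw [← h2]; exact ⟨h, v, rfl⟩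
    rcases this with h | h
    · exact Or.inl (D.inj h)
    · exact Or.inr (D.inj h)
  have endidx : ∀ e v i, i < (P e).len → (v = a e ∨ v = b e) →
      D.pos v ∈ segment ℝ ((P e).pt i) ((P e).pt (i + 1)) →
      (v = a e ∧ i = 0) ∨ (v = b e ∧ i + 1 = (P e).len) := by
    intro e v i hi hve hmem
    rcases hve with rfl | rfl
    · rw [← hpa e] at hmem
      have := simple_pt_mem (hS e) hi (Nat.zero_le _) hmem
      left; exact ⟨rfl, by omega⟩
    · rw [← hpb e] at hmem
      have := simple_pt_mem (hS e) hi le_rfl hmem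
      right; exact ⟨rfl, by omega⟩
  have key2 : ∀ e e' p, e ≠ e' → p ∈ (P e).image → p ∈ (P e').image →
      ∃ w, p = D.pos w ∧ (w = a e ∨ w = b e) ∧ (w = a e' ∨ w = b e') := by
    intro e e' p hne h1 h2
    obtain ⟨w, ⟨w1, w2⟩, rfl⟩ := hc e.1 e.2 e'.1 e'.2 (fun h => hne (Subtype.ext h)) ⟨h1, h2⟩
    exact ⟨w, rfl, (vmem w e).1 w1, (vmem w e').1 w2⟩
  -- the segments of all edges, with endpoints `A` and `B`
  let ι := Σ e : G.edgeSet, Fin (P e).len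
  let A : ι → ℝ × ℝ := fun z => (P z.1).pt z.2
  let B : ι → ℝ × ℝ := fun z => (P z.1).pt (z.2 + 1)
  have segim : ∀ (z : ι) p, p ∈ segment ℝ (A z) (B z) → p ∈ (P z.1).image :=
    fun z p h => (mem_image_iff _ _).2 ⟨z.2, z.2.2, h⟩
  have endpt : ∀ (z : ι) w, (w = a z.1 ∨ w = b z.1) → D.pos w ∈ segment ℝ (A z) (B z) →
      D.pos w = A z ∨ D.pos w = B z := by
    intro z w hw hm
    rcases endidx z.1 w z.2 z.2.2 hw hm with ⟨h1, h2⟩ | ⟨h1, h2⟩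
    · left; simp only [A]; rw [h1, ← hpa, h2]
    · right; simp only [B]; rw [h1, ← hpb, h2]
  have hnc : ∀ (z z' : ι) p, z ≠ z' → p ∈ segment ℝ (A z) (B z) → p ∈ segment ℝ (A z') (B z') →
      (p = A z ∨ p = B z) ∧ (p = A z' ∨ p = B z') := by
    intro z z' p hz h1 h2
    by_cases he : z.1 = z'.1
    · obtain ⟨e, i⟩ := z
      obtain ⟨e', j⟩ := z'
      simp only at he
      subst he
      have hij : (i : ℕ) ≠ j := fun h => hz (by rw [Fin.ext h])
      rcases lt_or_gt_of_ne hij with h | h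
      · obtain ⟨q1, q2⟩ := simple_seg_inter (hS e) h j.2 h1 h2
        refine ⟨Or.inr q1, Or.inl ?_⟩
        simp only [A]; rw [q2]; exact q1
      · obtain ⟨q1, q2⟩ := simple_seg_inter (hS e) h i.2 h2 h1
        refine ⟨Or.inl ?_, Or.inr q1⟩
        simp only [A]; rw [q2]; exact q1
    · obtain ⟨w, rfl, w1, w2⟩ := key2 z.1 z'.1 p he (segim z p h1) (segim z' p h2)
      exact ⟨endpt z w w1 h1, endpt z' w w2 h2⟩
  let Nd : Set (ℝ × ℝ) := ⋃ e : G.edgeSet, (P e).pt '' (Set.Iic (P e).len)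
  have hNd : Nd.Finite := Set.finite_iUnion (fun e => (Set.finite_Iic _).image _)
  have ndmem : ∀ e i, i ≤ (P e).len → (P e).pt i ∈ Nd := fun e i hi =>
    Set.mem_iUnion.2 ⟨e, i, hi, rfl⟩
  obtain ⟨θ, hθ⟩ := exists_generic_height Nd hNd
  have hA : ∀ z, A z ∈ Nd := fun z => ndmem _ _ z.2.2.le
  have hB : ∀ z, B z ∈ Nd := fun z => ndmem _ _ z.2.2
  obtain ⟨S, hlo, hhi⟩ := exists_segFam A B θ Nd hA hB
    (fun z h => by
      have := simple_pt_inj (hS z.1) z.2.2.le z.2.2 h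
      omega) hθ hnc
  let H : ℝ × ℝ → ℝ := fun p => p.2 + θ * p.1
  have ends : ∀ z y, (y = S.lo z ∨ y = S.hi z) ↔ (y = H (A z) ∨ y = H (B z)) := by
    intro z y
    rw [hlo, hhi]
    rcases le_total (H (A z)) (H (B z)) with g | g
    · rw [min_eq_left g, max_eq_right g]
    · rw [min_eq_right g, max_eq_left g]; exact or_comm
  have nodeof : ∀ z p, p ∈ Nd → (H p = S.lo z ∨ H p = S.hi z) → p = A z ∨ p = B z := by
    intro z p hp h
    rcases (ends z _).1 h with h | h
    · exact Or.inl (hθ hp (hA z) h)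
    · exact Or.inr (hθ hp (hB z) h)
  have posNd : ∀ v e, (v = a e ∨ v = b e) → D.pos v ∈ Nd := by
    rintro v e (rfl | rfl)
    · rw [← hpa]; exact ndmem _ _ (Nat.zero_le _)
    · rw [← hpb]; exact ndmem _ _ le_rfl
  -- the segment of `e` at its endvertex `v`
  let σ : V → G.edgeSet → ι := fun v e =>
    ⟨e, if v = a e then ⟨0, (P e).len_pos⟩ else ⟨(P e).len - 1, Nat.sub_lt (P e).len_pos one_pos⟩⟩
  have σ_ends : ∀ v e, (v = a e ∨ v = b e) → (H (D.pos v) = S.lo (σ v e) ∨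
      H (D.pos v) = S.hi (σ v e)) := by
    intro v e hve
    rw [ends]
    by_cases h : v = a e
    · left
      simp only [A, σ, if_pos h]
      rw [hpa, h]
    · right
      have hb := hve.resolve_left h
      simp only [B, σ, if_neg h]
      rw [Nat.sub_add_cancel (P e).len_pos, hpb, hb]
  have incid : ∀ v e, (v = a e ∨ v = b e) → ∀ z : ι,
      (H (D.pos v) = S.lo z ∨ H (D.pos v) = S.hi z) →
      (v = a z.1 ∨ v = b z.1) ∧ z = σ v z.1 := by
    intro v e hve z hz
    have hz' := nodeof z _ (posNd v e hve) hz
    have hmem : D.pos v ∈ segment ℝ (A z) (B z) := by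
      rcases hz' with h | h <;> rw [h]
      · exact left_mem_segment _ _ _
      · exact right_mem_segment _ _ _
    have h1 := key1 z.1 v (segim z _ hmem)
    refine ⟨h1, ?_⟩
    obtain ⟨e', i⟩ := z
    have hab' := (adj e').ne
    rcases endidx e' v i i.2 h1 hmem with ⟨h3, h4⟩ | ⟨h3, h4⟩
    · simp only [σ, if_pos h3]
      congr 1
      exact Fin.ext h4
    · have : ¬ v = a e' := fun h => hab' (h.symm.trans h3)
      simp only [σ, if_neg this]
      congr 1
      apply Fin.ext
      simp only
      omega
  let up : V → G.edgeSet → Prop := fun v e => S.lo (σ v e) = H (D.pos v)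
  let slope : V → G.edgeSet → ℝ := fun v e => if up v e then S.m (σ v e) else -S.m (σ v e)
  let N : V → G.edgeSet → ZMod 2 := fun v e => ∑ i : Fin (P e).len,
    ind (S.lo ⟨e, i⟩ < H (D.pos v) ∧ H (D.pos v) < S.hi ⟨e, i⟩ ∧
      S.px (H (D.pos v)) < S.X ⟨e, i⟩ (H (D.pos v)))
  have σ_inj : ∀ v e e', e ≠ e' → σ v e ≠ σ v e' := fun v e e' h h' => h (congrArg Sigma.fst h')
  have hlocal : ∀ v e e', e ≠ e' → (v = a e ∨ v = b e) → (v = a e' ∨ v = b e') →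
      (up v e ↔ up v e') → slope v e ≠ slope v e' ∧
        (S.rt (σ v e) (σ v e') ↔ slope v e < slope v e') := by
    intro v e e' hee h1 h2 hup
    by_cases hu : up v e
    · have hu' := hup.1 hu
      simp only [slope, if_pos hu, if_pos hu']
      exact S.rt_of_lo (σ_inj v e e' hee) (Eq.trans hu (Eq.symm hu'))
    · have hu' := fun h => hu (hup.2 h)
      simp only [slope, if_neg hu, if_neg hu']
      have t1 := (σ_ends v e h1).resolve_left (fun h => hu h.symm)
      have t2 := (σ_ends v e' h2).resolve_left (fun h => hu' h.symm)
      have := S.rt_of_hi (σ_inj v e e' hee) (t1.symm.trans t2)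
      refine ⟨fun h => this.1 (neg_inj.1 h), ?_⟩
      rw [this.2, neg_lt_neg_iff]
  have pval_eq : ∀ src tgt : G.edgeSet → V, (∀ e v, (v = src e ∨ v = tgt e) ↔ (v = a e ∨ v = b e)) →
      ∀ c v e, (v = a e ∨ v = b e) → pval src tgt N up slope c v e =
        S.endVal (fun z : ι => c z.1) (σ v e) (H (D.pos v)) := by
    intro src tgt hst c v e hve
    rw [S.endVal_eq _ _ (σ_ends v e hve), SegFam.nodeVal, Fintype.sum_sigma, Fintype.sum_sigma,
      ← Finset.sum_add_distrib, pval]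
    refine Finset.sum_congr rfl (fun e' _ => ?_)
    simp only
    rw [← Finset.mul_sum, ← Finset.mul_sum, ← mul_add]
    congr 2
    rw [hst]
    by_cases hve' : v = a e' ∨ v = b e'
    · rw [Finset.sum_eq_single (σ v e').2]
      · have e1 : (⟨e', (σ v e').2⟩ : ι) = σ v e' := rfl
        rw [e1]
        congr 1
        simp only [hve', σ_ends v e' hve', true_and, eq_iff_iff]
        refine and_congr_right (fun hup => ?_)
        by_cases hee : e = e'
        · subst hee
          simp [S.rt_irrefl]
        · exact (hlocal v e e' hee hve hve' hup).2.symm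
      · intro i _ hi
        refine ind_false (fun h => hi ?_)
        have := (incid v e hve ⟨e', i⟩ h.1).2
        exact eq_of_heq (Sigma.mk.inj this).2
      · simp
    · rw [ind_false (fun h => hve' h.1), Finset.sum_eq_zero]
      intro i _
      exact ind_false (fun h => hve' (incid v e hve ⟨e', i⟩ h.1).1)
  have cyc : ∀ src tgt : G.edgeSet → V, (∀ e, e.1 = s(src e, tgt e)) → ∀ c, ECyc src tgt c →
      S.Cyc (fun z : ι => c z.1) := by
    intro src tgt hst c hcyc F
    rw [Fintype.sum_sigma, ← hcyc (fun v => F (H (D.pos v)))]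
    refine Finset.sum_congr rfl (fun e _ => ?_)
    simp only
    rw [← Finset.mul_sum]
    congr 1
    have : ∀ i : Fin (P e).len, F (S.lo ⟨e, i⟩) + F (S.hi ⟨e, i⟩) =
        F (H ((P e).pt i)) + F (H ((P e).pt (i + 1))) := by
      intro i
      rw [hlo, hhi]
      rcases le_total (H (A ⟨e, i⟩)) (H (B ⟨e, i⟩)) with g | g
      · rw [min_eq_left g, max_eq_right g]
      · rw [min_eq_right g, max_eq_left g, add_comm]
    rw [Finset.sum_congr rfl (fun i _ => this i),
      telescope (P e).len (fun i => F (H ((P e).pt i))), hpa, hpb]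
    have h2 := (hab e).symm.trans (hst e)
    rw [Sym2.eq_iff] at h2
    rcases h2 with ⟨h3, h4⟩ | ⟨h3, h4⟩
    · rw [h3, h4]
    · rw [h3, h4, add_comm]
  have prop : ∀ c : G.edgeSet → ZMod 2, S.Cyc (fun z : ι => c z.1) → ∀ e, c e = 0 →
      ∀ (i : ℕ) (hi : i < (P e).len) (y y' : ℝ),
      S.endVal (fun z : ι => c z.1) ⟨e, ⟨i, hi⟩⟩ y =
        S.endVal (fun z : ι => c z.1) ⟨e, ⟨0, (P e).len_pos⟩⟩ y' := by
    intro c hcy e hce i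
    induction i with
    | zero => intro hi y y'; exact S.endVal_ends hcy hce y y'
    | succ i ih =>
      intro hi y y'
      have hi' : i < (P e).len := by omega
      have hnode : ∀ z : ι, (H ((P e).pt (i + 1)) = S.lo z ∨ H ((P e).pt (i + 1)) = S.hi z) →
          c z.1 = 0 := by
        intro z hz
        have hz' := nodeof z _ (ndmem e (i + 1) (by omega)) hz
        by_cases he : e = z.1
        · rw [← he]; exact hce
        exfalso
        have hmem : (P e).pt (i + 1) ∈ segment ℝ (A z) (B z) := by
          rcases hz' with h | h <;> rw [h]
          · exact left_mem_segment _ _ _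
          · exact right_mem_segment _ _ _
        obtain ⟨w, w0, w1, _⟩ := key2 e z.1 _ he (pt_mem_image _ (by omega)) (segim z _ hmem)
        rcases w1 with rfl | rfl
        · rw [← hpa] at w0
          have := simple_pt_inj (hS e) (by omega) (by omega) w0
          omega
        · rw [← hpb] at w0
          have := simple_pt_inj (hS e) (by omega) (by omega) w0
          omega
      rw [← ih hi' (H ((P e).pt (i + 1))) y', S.endVal_ends hcy hce y (H ((P e).pt (i + 1))),
        S.endVal_eq_nodeVal _ _ _ hnode, S.endVal_eq_nodeVal _ _ _ hnode]
      · exact (ends _ _).2 (Or.inr rfl)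
      · exact (ends _ _).2 (Or.inl rfl)
  have prop' : ∀ c : G.edgeSet → ZMod 2, S.Cyc (fun z : ι => c z.1) → ∀ e, c e = 0 →
      ∀ (i j : Fin (P e).len) (y y' : ℝ), S.endVal (fun z : ι => c z.1) ⟨e, i⟩ y =
        S.endVal (fun z : ι => c z.1) ⟨e, j⟩ y' := by
    intro c hcy e hce i j y y'
    rw [prop c hcy e hce i i.2 y 0, prop c hcy e hce j j.2 y' 0]
  -- the rightmost segment at the lowest node
  have : Nonempty ι := by
    obtain ⟨e⟩ := hne
    exact ⟨⟨e, ⟨0, (P e).len_pos⟩⟩⟩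
  obtain ⟨z0, hz0⟩ := Finite.exists_min S.lo
  obtain ⟨g, hg1, hg2⟩ := (Finset.univ.filter (fun z => S.lo z = S.lo z0)).exists_max_image S.m
    ⟨z0, by simp⟩
  simp only [Finset.mem_filter, Finset.mem_univ, true_and] at hg1 hg2
  have hbot : ∀ Z, S.bot Z g = 0 := by
    intro Z
    refine Finset.sum_eq_zero (fun z _ => ?_)
    rw [ind_false, mul_zero]
    rintro ⟨h1, _, h3⟩
    have h4 : S.lo z = S.lo z0 := le_antisymm (h1.trans hg1.le) (hz0 z)
    by_cases hgz : g = z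
    · subst hgz; exact S.rt_irrefl g h3
    · exact absurd ((S.rt_of_lo hgz (hg1.trans h4.symm)).2.1 h3) (not_lt.2 (hg2 z h4))
  refine ⟨g.1, fun src tgt hst => ?_⟩
  have hst' : ∀ e v, (v = src e ∨ v = tgt e) ↔ (v = a e ∨ v = b e) := fun e v => by
    rw [← vmem, hst e, Sym2.mem_iff]
  refine ⟨⟨N, up, slope, ?_, ?_, ?_⟩⟩
  · intro v e e' hee h1 h2 hup
    exact (hlocal v e e' hee ((hst' _ _).1 h1) ((hst' _ _).1 h2) hup).1
  · intro c hcy e hce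
    rw [pval_eq src tgt hst' c _ e ((hst' _ _).1 (Or.inl rfl)),
      pval_eq src tgt hst' c _ e ((hst' _ _).1 (Or.inr rfl))]
    exact prop' c (cyc src tgt hst c hcy) e hce _ _ _ _
  · intro c hcy hce v hv
    rw [pval_eq src tgt hst' c _ _ ((hst' _ _).1 hv)]
    have h1 := prop' c (cyc src tgt hst c hcy) g.1 hce (σ v g.1).2 g.2 (H (D.pos v)) (S.lo g)
    have h2 : S.endVal (fun z : ι => c z.1) g (S.lo g) = 0 := by
      rw [SegFam.endVal, if_pos rfl, hbot]
    exact h1.trans h2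

end OctiProof

/-! ### st-numberings -/

namespace OctiProof

open Finset Classical

/-- `g` is an st-numbering of the subgraph of `G` induced on `S`, up to the range of its values. -/
def PartialST {V : Type*} (G : SimpleGraph V) (s t : V) (S : Finset V) (g : V → ℕ) : Prop :=
  Set.InjOn g S ∧ (∀ v ∈ S, g s ≤ g v ∧ g v ≤ g t) ∧
  (∀ v ∈ S, v ≠ s → ∃ w ∈ S, G.Adj v w ∧ g w < g v) ∧
  (∀ v ∈ S, v ≠ t → ∃ w ∈ S, G.Adj v w ∧ g v < g w)

/-- Adding an ear `a, q 0, …, q (k - 1), b` to a partial st-numbering, the new vertices being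
numbered consecutively just above `a`. -/
theorem PartialST.ear {V : Type*} {G : SimpleGraph V} {s t : V} {S : Finset V} {g : V → ℕ}
    (h : PartialST G s t S g) (hs : s ∈ S) (ht : t ∈ S) {a b : V} (ha : a ∈ S) (hb : b ∈ S)
    (hab : g a < g b) (q : ℕ → V) (k : ℕ) (hk : 1 ≤ k) (hinj : ∀ i < k, ∀ j < k, q i = q j → i = j)
    (hq : ∀ i < k, q i ∉ S) (hadj : ∀ i, i + 1 < k → G.Adj (q i) (q (i + 1)))
    (h0 : G.Adj a (q 0)) (h1 : G.Adj (q (k - 1)) b) :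
    ∃ g', PartialST G s t (S ∪ (Finset.range k).image q) g' := by
  obtain ⟨hi, hr, hd, hu⟩ := h
  have : ∃ idx : V → ℕ, ∀ i < k, idx (q i) = i := by
    refine ⟨fun v => if h : ∃ i < k, q i = v then h.choose else 0, fun i hik => ?_⟩
    have h : ∃ j < k, q j = q i := ⟨i, hik, rfl⟩
    simp only [dif_pos h]
    exact hinj _ h.choose_spec.1 _ hik h.choose_spec.2
  obtain ⟨idx, hidx⟩ := this
  let g' : V → ℕ := fun v => if v ∈ S then (k + 1) * g v else (k + 1) * g a + 1 + idx v
  have gS : ∀ v ∈ S, g' v = (k + 1) * g v := fun v hv => if_pos hv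
  have gq : ∀ i < k, g' (q i) = (k + 1) * g a + 1 + i := fun i hik => by
    simp only [g', if_neg (hq i hik), hidx i hik]
  have lo : ∀ x y : ℕ, x < y → (k + 1) * x + (k + 1) ≤ (k + 1) * y := fun x y hxy => by
    calc (k + 1) * x + (k + 1) = (k + 1) * (x + 1) := by ring
      _ ≤ _ := Nat.mul_le_mul_left _ hxy
  have le : ∀ x y : ℕ, x ≤ y → (k + 1) * x ≤ (k + 1) * y := fun x y hxy => Nat.mul_le_mul_left _ hxy
  have mem : ∀ v, v ∈ S ∪ (Finset.range k).image q ↔ v ∈ S ∨ ∃ i < k, q i = v := fun v => by simp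
  have ne : ∀ v ∈ S, ∀ i < k, g' v ≠ g' (q i) := by
    intro v hv i hik
    rw [gS v hv, gq i hik]
    rcases le_or_gt (g v) (g a) with h | h
    · have := le _ _ h; omega
    · have := lo _ _ h; omega
  refine ⟨g', ?_, ?_, ?_, ?_⟩
  · intro v hv w hw hvw
    rw [Finset.mem_coe, mem] at hv hw
    rcases hv with hv | ⟨i, hik, rfl⟩ <;> rcases hw with hw | ⟨j, hjk, rfl⟩
    · rw [gS v hv, gS w hw] at hvw
      exact hi hv hw (Nat.eq_of_mul_eq_mul_left (Nat.succ_pos k) hvw)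
    · exact absurd hvw (ne v hv j hjk)
    · exact absurd hvw.symm (ne w hw i hik)
    · rw [gq i hik, gq j hjk] at hvw
      have : i = j := by omega
      rw [this]
  · intro v hv
    rw [mem] at hv
    rw [gS s hs, gS t ht]
    rcases hv with hv | ⟨i, hik, rfl⟩
    · rw [gS v hv]
      exact ⟨le _ _ (hr v hv).1, le _ _ (hr v hv).2⟩
    · rw [gq i hik]
      have h1 := le _ _ (hr a ha).1
      have h2 := le _ _ (hr b hb).2
      have h3 := lo _ _ hab
      omega
  · intro v hv hvs
    rw [mem] at hv
    rcases hv with hv | ⟨i, hik, rfl⟩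
    · obtain ⟨w, hw, h2, h3⟩ := hd v hv hvs
      refine ⟨w, (mem w).2 (Or.inl hw), h2, ?_⟩
      rw [gS v hv, gS w hw]
      have := lo _ _ h3
      omega
    · rcases i with _ | i
      · refine ⟨a, (mem a).2 (Or.inl ha), h0.symm, ?_⟩
        rw [gS a ha, gq 0 hik]; omega
      · refine ⟨q i, (mem _).2 (Or.inr ⟨i, by omega, rfl⟩), (hadj i hik).symm, ?_⟩
        rw [gq i (by omega), gq _ hik]; omega
  · intro v hv hvs
    rw [mem] at hv
    rcases hv with hv | ⟨i, hik, rfl⟩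
    · obtain ⟨w, hw, h2, h3⟩ := hu v hv hvs
      refine ⟨w, (mem w).2 (Or.inl hw), h2, ?_⟩
      rw [gS v hv, gS w hw]
      have := lo _ _ h3
      omega
    · by_cases h : i + 1 < k
      · refine ⟨q (i + 1), (mem _).2 (Or.inr ⟨i + 1, h, rfl⟩), hadj i h, ?_⟩
        rw [gq i hik, gq _ h]; omega
      · have : i = k - 1 := by omega
        subst this
        refine ⟨b, (mem b).2 (Or.inl hb), h1, ?_⟩
        rw [gS b hb, gq _ hik]
        have := lo _ _ hab
        omega

/-- st-numberings exist, by ear decomposition: a partial st-numbering on a largest possible vertex set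
`S` covers everything, since an edge leaving `S` extends, avoiding its end in `S`, to an ear
returning to `S` elsewhere. -/
theorem exists_st_numbering {V : Type*} [Fintype V] (G : SimpleGraph V)
    (hG : ∀ S : Set V, S.ncard ≤ 2 → (G.induce Sᶜ).Connected) (s t : V) (hst : G.Adj s t) :
    ∃ f : V → ℕ, Function.Injective f ∧ (∀ v, f s ≤ f v ∧ f v ≤ f t) ∧
      (∀ v, v ≠ s → ∃ w, G.Adj v w ∧ f w < f v) ∧ (∀ v, v ≠ t → ∃ w, G.Adj v w ∧ f v < f w) := by
  have base : ∃ g, PartialST G s t {s, t} g := by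
    refine ⟨fun v => if v = s then 0 else 1, ?_, ?_, ?_, ?_⟩ <;> have hne := hst.ne.symm
    · intro v hv w hw
      simp only [coe_insert, coe_singleton, Set.mem_insert_iff, Set.mem_singleton_iff] at hv hw
      rcases hv with rfl | rfl <;> rcases hw with rfl | rfl <;> simp [hne]
    · intro v hv
      simp only [mem_insert, mem_singleton] at hv
      rcases hv with rfl | rfl <;> simp [hne]
    · intro v hv hvs
      simp only [mem_insert, mem_singleton] at hv
      rcases hv with rfl | rfl
      · exact absurd rfl hvs
      · exact ⟨s, by simp, hst.symm, by simp [hne]⟩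
    · intro v hv hvs
      simp only [mem_insert, mem_singleton] at hv
      rcases hv with rfl | rfl
      · exact ⟨t, by simp, hst, by simp [hne]⟩
      · exact absurd rfl hvs
  obtain ⟨S, hS, hmax⟩ := (Finset.univ.filter (fun S : Finset V => s ∈ S ∧ t ∈ S ∧
    ∃ g, PartialST G s t S g)).exists_max_image Finset.card ⟨{s, t}, by simpa using base⟩
  simp only [mem_filter, mem_univ, true_and] at hS hmax
  obtain ⟨hs, ht, g, hg⟩ := hS
  have hall : ∀ v, v ∈ S := by
    by_contra! hcon
    obtain ⟨v, hv⟩ := hcon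
    -- an edge leaving `S`
    have : ∃ a p, a ∈ S ∧ p ∉ S ∧ G.Adj a p := by
      by_contra! hno
      have hc := hG ∅ (by simp)
      obtain ⟨w⟩ := hc.preconnected ⟨s, by simp⟩ ⟨v, by simp⟩
      have : ∀ (x y : ((∅ : Set V)ᶜ : Set V)), (G.induce (∅ : Set V)ᶜ).Walk x y →
          x.1 ∈ S → y.1 ∈ S := by
        intro x y w
        induction w with
        | nil => exact id
        | cons h _ ih => exact fun hx => ih (by_contra fun hn => hno _ _ hx hn h)
      exact hv (this _ _ w hs)
    obtain ⟨a, p, ha, hp, hap⟩ := this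
    have hpa : p ≠ a := fun h => hp (h ▸ ha)
    have : ∃ x ∈ S, x ≠ a := by
      by_cases h : s = a
      · exact ⟨t, ht, fun h' => hst.ne (h.trans h'.symm)⟩
      · exact ⟨s, hs, h⟩
    obtain ⟨x, hx, hxa⟩ := this
    obtain ⟨w⟩ := (hG {a} (by simp)).preconnected ⟨p, hpa⟩ ⟨x, hxa⟩
    let P := w.toPath
    let r : ℕ → V := fun i => (P.1.getVert i).1
    have hex : ∃ i, i ≤ P.1.length ∧ r i ∈ S :=
      ⟨P.1.length, le_rfl, by simp only [r, SimpleGraph.Walk.getVert_length]; exact hx⟩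
    obtain ⟨k, ⟨hkl, hkS⟩, hmin⟩ : ∃ k, (k ≤ P.1.length ∧ r k ∈ S) ∧ ∀ i < k, r i ∉ S := by
      refine ⟨Nat.find hex, Nat.find_spec hex, fun i hi h => Nat.find_min hex hi ⟨?_, h⟩⟩
      exact hi.le.trans (Nat.find_spec hex).1
    have r0 : r 0 = p := by simp [r]
    have hk : 1 ≤ k := by
      rcases k with _ | k
      · exact absurd (r0 ▸ hkS) hp
      · omega
    have hradj : ∀ i, i < k → G.Adj (r i) (r (i + 1)) := fun i hi =>
      P.1.adj_getVert_succ (lt_of_lt_of_le hi hkl)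
    have hrinj : ∀ i < k, ∀ j < k, r i = r j → i = j := by
      intro i hi j hj hij
      exact P.2.getVert_injOn (by simp; omega) (by simp; omega) (Subtype.ext hij)
    have hka : r k ≠ a := (P.1.getVert k).2
    have hgne : g a ≠ g (r k) := fun h => hka (hg.1 ha hkS h).symm
    have grow : ∀ q : ℕ → V, (∀ i < k, q i ∉ S) → ¬ ∃ g', PartialST G s t
        (S ∪ (Finset.range k).image q) g' := by
      intro q hq hex
      have := hmax _ ⟨mem_union_left _ hs, mem_union_left _ ht, hex⟩
      have h2 : S ⊂ S ∪ (Finset.range k).image q := by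
        refine (Finset.ssubset_iff_of_subset subset_union_left).2 ⟨q 0, ?_, hq 0 hk⟩
        exact mem_union_right _ (mem_image.2 ⟨0, by simp; omega, rfl⟩)
      exact absurd (Finset.card_lt_card h2) (not_lt.2 this)
    rcases lt_or_gt_of_ne hgne with h | h
    · refine grow r hmin (hg.ear hs ht ha hkS h r k hk hrinj hmin (fun i hi => hradj i (by omega))
        (r0 ▸ hap) ?_)
      have := hradj (k - 1) (by omega)
      rwa [Nat.sub_add_cancel hk] at this
    · refine grow (fun i => r (k - 1 - i)) (fun i hi => hmin _ (by omega))
        (hg.ear hs ht hkS ha h _ k hk ?_ (fun i hi => hmin _ (by omega)) ?_ ?_ ?_)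
      · intro i hi j hj hij
        have := hrinj _ (by omega) _ (by omega) hij
        omega
      · intro i hi
        have := hradj (k - 1 - (i + 1)) (by omega)
        rw [show k - 1 - (i + 1) + 1 = k - 1 - i by omega] at this
        exact this.symm
      · have := hradj (k - 1) (by omega)
        rw [Nat.sub_add_cancel hk] at this
        simpa using this.symm
      · simp only [Nat.sub_self, r0]; exact hap.symm
  refine ⟨g, fun v w h => hg.1 (hall v) (hall w) h, fun v => hg.2.1 v (hall v), fun v hv => ?_,
    fun v hv => ?_⟩
  · obtain ⟨w, _, h⟩ := hg.2.2.1 v (hall v) hv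
    exact ⟨w, h⟩
  · obtain ⟨w, _, h⟩ := hg.2.2.2 v (hall v) hv
    exact ⟨w, h⟩

end OctiProof

/-! ### The left-to-right order of overlapping edges -/

namespace OctiProof

open Finset Classical

/-- An st-oriented (multi)graph: vertices have distinct levels `f`, edges go up, `e0` joins the
lowest vertex `s` to the highest vertex `t`, and every other vertex has edges on both sides. -/
structure STGraph (V E : Type*) where
  src : E → V
  tgt : E → V
  f : V → ℕ
  s : V
  t : V
  e0 : E
  finj : Function.Injective f
  flt : ∀ e, f (src e) < f (tgt e)
  hs : ∀ v, f s ≤ f v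
  ht : ∀ v, f v ≤ f t
  src0 : src e0 = s
  tgt0 : tgt e0 = t
  hin : ∀ v, v ≠ s → ∃ e, tgt e = v
  hout : ∀ v, v ≠ t → ∃ e, src e = v

/-- Two edges overlap if their open intervals of levels meet. -/
def STGraph.Ov {V E : Type*} (S : STGraph V E) (e e' : E) : Prop :=
  S.f (S.src e) < S.f (S.tgt e') ∧ S.f (S.src e') < S.f (S.tgt e)

/-- The edge `e` passes the level of the vertex `v`. -/
def STGraph.Pass {V E : Type*} (S : STGraph V E) (e : E) (v : V) : Prop :=
  S.f (S.src e) < S.f v ∧ S.f v < S.f (S.tgt e)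

/-- A left-to-right order on overlapping edges, compatible with incidences at vertices. -/
structure EdgeOrder {V E : Type*} (S : STGraph V E) where
  lt : E → E → Prop
  irrefl : ∀ e, ¬ lt e e
  total : ∀ e e', S.Ov e e' → e ≠ e' → (lt e e' ↔ ¬ lt e' e)
  trans : ∀ a b c, S.Ov a b → S.Ov b c → S.Ov a c → lt a b → lt b c → lt a c
  left : ∀ v e o e', S.tgt e = v → S.src o = v → S.Pass e' v → (lt e e' ↔ lt o e')
  right : ∀ v e o e', S.tgt e = v → S.src o = v → S.Pass e' v → (lt e' e ↔ lt e' o)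

/-- The mod-2 boundary pairing of an edge chain with a function on vertices. -/
def pair {V E : Type*} [Fintype E] (src tgt : E → V) (c : E → ZMod 2) (F : V → ZMod 2) : ZMod 2 :=
  ∑ e, c e * (F (src e) + F (tgt e))

/-- The chain consisting of the single edge `e`. -/
noncomputable def one {E : Type*} (e : E) : E → ZMod 2 := fun x => ind (x = e)

theorem one_self {E : Type*} (e : E) : one e e = 1 := ind_true rfl

theorem one_ne {E : Type*} {e x : E} (h : x ≠ e) : one e x = 0 := ind_false h

theorem sum_one_mul {E : Type*} [Fintype E] (e : E) (g : E → ZMod 2) :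
    ∑ x, one e x * g x = g e := by
  rw [Finset.sum_eq_single e]
  · rw [one_self, one_mul]
  · intro x _ h; rw [one_ne h, zero_mul]
  · simp

theorem pair_add {V E : Type*} [Fintype E] (src tgt : E → V) (c c' : E → ZMod 2) (F : V → ZMod 2) :
    pair src tgt (c + c') F = pair src tgt c F + pair src tgt c' F := by
  simp [pair, add_mul, Finset.sum_add_distrib]

theorem pair_one {V E : Type*} [Fintype E] (src tgt : E → V) (e : E) (F : V → ZMod 2) :
    pair src tgt (one e) F = F (src e) + F (tgt e) := sum_one_mul e _

theorem zmod2_cases (x : ZMod 2) : x = 0 ∨ x = 1 := by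
  revert x; decide

/-- Among three elements on two sides, an odd number of pairs is on the same side. -/
theorem ind_side_sum (p q r : Prop) :
    ind (p ↔ q) + ind (p ↔ r) + ind (q ↔ r) = 1 := by
  by_cases hp : p <;> by_cases hq : q <;> by_cases hr : r <;> simp [ind, hp, hq, hr] <;> decide

theorem iff_side (p q r : Prop) : ((p ↔ q) ↔ (p ↔ r)) ↔ (r ↔ q) := by
  by_cases hp : p <;> by_cases hq : q <;> by_cases hr : r <;> simp [hp, hq, hr]

theorem zmod2_eq_of_add {a b : ZMod 2} (h : a + b = 0) : a = b := CharTwo.add_eq_zero.1 h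

/-- Position of an edge of slope `a` in the rotation starting from an edge of slope `c`, where `p`
says that both leave on the same side: same side to the right, other side from right to left, same
side to the left. -/
noncomputable def lkey (p : Prop) (a c : ℝ) : ℤ ×ₗ ℝ :=
  toLex (if p then (if c < a then 0 else 2) else 1, if p then a else -a)

/-- A sum of three side indicators, as it arises from crossing parities at a vertex, is the comparison
of two positions in the rotation. -/
theorem loc_aux (p q : Prop) (a b c : ℝ) (n1 : (p ↔ q) → a ≠ b) (n2 : p → a ≠ c) (n3 : q → b ≠ c) :
    ind (p ∧ c < a) + ind (q ∧ b < c) + ind ((p ↔ q) ∧ b < a) = ind (lkey p a c < lkey q b c) := by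
  simp only [lkey, Prod.Lex.toLex_lt_toLex]
  have h2 : (1 + 1 : ZMod 2) = 0 := by decide
  by_cases hp : p <;> by_cases hq : q
  · rcases lt_or_gt_of_ne (n1 (by tauto)) with h | h <;> rcases lt_or_gt_of_ne (n2 hp) with h' | h' <;>
      rcases lt_or_gt_of_ne (n3 hq) with h'' | h'' <;>
      first
      | (exfalso; linarith)
      | simp [ind, hp, hq, h, h', h'', h.not_gt, h'.not_gt, h''.not_gt, h2]
  · rcases lt_or_gt_of_ne (n2 hp) with h' | h' <;> simp [ind, hp, hq, h', h'.not_gt]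
  · rcases lt_or_gt_of_ne (n3 hq) with h' | h' <;> simp [ind, hp, hq, h', h'.not_gt]
  · rcases lt_or_gt_of_ne (n1 (by tauto)) with h | h <;> simp [ind, hp, hq, h, h.not_gt]

section

variable {V E : Type*} [Fintype E] (S : STGraph V E) (P : Parity S.src S.tgt S.e0)

/-- The crossing parity of the chain `c` seen from `e` at `v`. -/
noncomputable abbrev val (c : E → ZMod 2) (v : V) (e : E) : ZMod 2 :=
  pval S.src S.tgt P.N P.up P.slope c v e

theorem val_add (c c' : E → ZMod 2) (v : V) (e : E) :
    val S P (c + c') v e = val S P c v e + val S P c' v e := by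
  simp [val, pval, add_mul, Finset.sum_add_distrib]

/-- At a vertex off the chain the crossing parity does not depend on the edge. -/
theorem val_off (c : E → ZMod 2) (v : V) (h : ∀ z, c z ≠ 0 → v ≠ S.src z ∧ v ≠ S.tgt z) (e e' : E) :
    val S P c v e = val S P c v e' := by
  refine Finset.sum_congr rfl (fun z _ => ?_)
  by_cases hz : c z = 0
  · simp [hz]
  · have := h z hz
    rw [ind_false (by tauto), ind_false (by tauto)]

/-- A cycle lying above an edge's source does not separate that edge from the outer face. -/
theorem val_low (Z : E → ZMod 2) (hZ : ECyc S.src S.tgt Z) (m : ℕ)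
    (hm : ∀ z, Z z ≠ 0 → m ≤ S.f (S.src z)) (n : ℕ) : ∀ e, S.f (S.src e) = n → n < m →
    val S P Z (S.src e) e = 0 := by
  induction n using Nat.strong_induction_on with
  | _ n ih =>
    intro e he hn
    have off : ∀ z, Z z ≠ 0 → S.src e ≠ S.src z ∧ S.src e ≠ S.tgt z := by
      intro z hz
      have h1 := hm z hz
      have h2 := S.flt z
      constructor <;> intro h <;> rw [h] at he <;> omega
    by_cases hes : S.src e = S.s
    · rw [val_off S P Z _ off e S.e0]
      refine P.outer Z hZ ?_ _ (Or.inl (hes.trans S.src0.symm))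
      by_contra h
      exact (off _ h).1 (hes.trans S.src0.symm)
    · obtain ⟨d, hd⟩ := S.hin _ hes
      have hlt := S.flt d
      rw [hd, he] at hlt
      rw [val_off S P Z _ off e d, ← hd, val, ← P.const Z hZ d]
      · exact ih _ hlt d rfl (hlt.trans hn)
      · by_contra h
        have := hm d h
        omega

/-- A cycle lying below an edge's target does not separate that edge from the outer face. -/
theorem val_high (Z : E → ZMod 2) (hZ : ECyc S.src S.tgt Z) (m : ℕ)
    (hm : ∀ z, Z z ≠ 0 → S.f (S.tgt z) ≤ m) (n : ℕ) : ∀ e, S.f S.t = n + S.f (S.tgt e) →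
    m < S.f (S.tgt e) → val S P Z (S.tgt e) e = 0 := by
  induction n using Nat.strong_induction_on with
  | _ n ih =>
    intro e he hn
    have off : ∀ z, Z z ≠ 0 → S.tgt e ≠ S.src z ∧ S.tgt e ≠ S.tgt z := by
      intro z hz
      have h1 := hm z hz
      have h2 := S.flt z
      constructor <;> intro h <;> rw [h] at hn <;> omega
    by_cases hes : S.tgt e = S.t
    · rw [val_off S P Z _ off e S.e0]
      refine P.outer Z hZ ?_ _ (Or.inr (hes.trans S.tgt0.symm))
      by_contra h
      exact (off _ h).2 (hes.trans S.tgt0.symm)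
    · obtain ⟨d, hd⟩ := S.hout _ hes
      have hlt := S.flt d
      rw [hd] at hlt
      have hle := S.ht (S.tgt d)
      rw [val_off S P Z _ off e d, ← hd, val, P.const Z hZ d]
      · exact ih (S.f S.t - S.f (S.tgt d)) (by omega) d (by omega) (by omega)
      · by_contra h
        have := hm d h
        omega

/-- Descending paths: `dn v` is a chosen edge into `v`, and `D v` is the path from `v` to `s` following
these edges, as a mod-2 chain. -/
theorem exists_down : ∃ (dn : V → E) (D : V → E → ZMod 2), (∀ v, v ≠ S.s → S.tgt (dn v) = v) ∧
    ∀ v, (∀ F, pair S.src S.tgt (D v) F = F v + F S.s) ∧ (∀ e, D v e ≠ 0 → S.f (S.tgt e) ≤ S.f v) ∧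
      ∀ e, S.tgt e = v → v ≠ S.s → D v e = one (dn v) e := by
  have : ∀ v, ∃ e, v ≠ S.s → S.tgt e = v := fun v => by
    by_cases h : v = S.s
    · exact ⟨S.e0, fun h' => absurd h h'⟩
    · obtain ⟨e, he⟩ := S.hin v h
      exact ⟨e, fun _ => he⟩
  choose dn hdn using this
  have : ∀ n v, S.f v = n → ∃ D : E → ZMod 2, (∀ F, pair S.src S.tgt D F = F v + F S.s) ∧
      (∀ e, D e ≠ 0 → S.f (S.tgt e) ≤ S.f v) ∧
      ∀ e, S.tgt e = v → v ≠ S.s → D e = one (dn v) e := by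
    intro n
    induction n using Nat.strong_induction_on with
    | _ n ih =>
      intro v hv
      by_cases h : v = S.s
      · refine ⟨0, fun F => ?_, by simp, fun e he h' => absurd h h'⟩
        rw [h, zmod2_add_self]; simp [pair]
      · have hlt := S.flt (dn v)
        rw [hdn v h] at hlt
        obtain ⟨D, h1, h2, _⟩ := ih _ (hv ▸ hlt) (S.src (dn v)) rfl
        refine ⟨one (dn v) + D, fun F => ?_, fun e he => ?_, fun e he _ => ?_⟩
        · rw [pair_add, pair_one, h1, hdn v h]
          linear_combination zmod2_add_self (F (S.src (dn v)))
        · by_cases hed : e = dn v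
          · rw [hed, hdn v h]
          · rw [Pi.add_apply, one_ne hed, zero_add] at he
            exact (h2 e he).trans hlt.le
        · have : D e = 0 := by
            by_contra hD
            have := h2 e hD
            rw [he] at this
            omega
          rw [Pi.add_apply, this, add_zero]
  choose D hD using fun v => this _ v rfl
  exact ⟨dn, D, hdn, hD⟩

/-- Ascending paths: `U v` is a path from `v` to `t` going up, as a mod-2 chain. -/
theorem exists_up : ∃ U : V → E → ZMod 2, ∀ v, (∀ F, pair S.src S.tgt (U v) F = F v + F S.t) ∧
    (∀ e, U v e ≠ 0 → S.f v ≤ S.f (S.src e)) := by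
  have : ∀ n v, S.f S.t = n + S.f v → ∃ U : E → ZMod 2,
      (∀ F, pair S.src S.tgt U F = F v + F S.t) ∧
      (∀ e, U e ≠ 0 → S.f v ≤ S.f (S.src e)) := by
    intro n
    induction n using Nat.strong_induction_on with
    | _ n ih =>
      intro v hv
      by_cases h : v = S.t
      · refine ⟨0, fun F => ?_, by simp⟩
        rw [h, zmod2_add_self]; simp [pair]
      · obtain ⟨d, hd⟩ := S.hout v h
        have hlt := S.flt d
        rw [hd] at hlt
        have hle := S.ht (S.tgt d)
        obtain ⟨D, h1, h2⟩ := ih (S.f S.t - S.f (S.tgt d)) (by omega) (S.tgt d) (by omega)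
        refine ⟨one d + D, fun F => ?_, fun e he => ?_⟩
        · rw [pair_add, pair_one, h1, hd]
          linear_combination zmod2_add_self (F (S.tgt d))
        · by_cases hed : e = d
          · rw [hed, hd]
          · rw [Pi.add_apply, one_ne hed, zero_add] at he
            exact hlt.le.trans (h2 e he)
  choose U hU using fun v => this _ v (Nat.sub_add_cancel (S.ht v)).symm
  exact ⟨U, hU⟩

/-- `y` leaves `u` on the same side as `x` and to its right. -/
noncomputable def loc (u : V) (x y : E) : ZMod 2 :=
  ind ((P.up u x ↔ P.up u y) ∧ P.slope u x < P.slope u y)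

theorem loc_add (u : V) (x y : E) (hxy : x ≠ y) (hx : u = S.src x ∨ u = S.tgt x)
    (hy : u = S.src y ∨ u = S.tgt y) :
    loc S P u x y + loc S P u y x = ind (P.up u x ↔ P.up u y) := by
  have hne := P.slope_ne u x y hxy hx hy
  by_cases h : P.up u x ↔ P.up u y
  · rcases lt_or_gt_of_ne (hne h) with h1 | h1
    · simp [loc, ind, h, h1, h1.not_gt]
    · simp [loc, ind, h, h1, h1.not_gt]
  · have h' : ¬ (P.up u y ↔ P.up u x) := fun g => h g.symm
    simp [loc, ind, h, h']

/-- Position of `x` in the rotation at `u` starting from `A`. -/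
noncomputable def rkey (u : V) (A x : E) : ℤ ×ₗ ℝ :=
  lkey (P.up u A ↔ P.up u x) (P.slope u x) (P.slope u A)

/-- Specialization of `loc_aux` to three edges at `u`: the sum of the local terms compares the
positions of `x` and `y` in the rotation at `u` starting from `A`.  Hence these terms define a linear
order. -/
theorem loc_rkey (u : V) (A x y : E) (hAx : x ≠ A) (hAy : y ≠ A) (hxy : x ≠ y)
    (hA : u = S.src A ∨ u = S.tgt A) (hx : u = S.src x ∨ u = S.tgt x)
    (hy : u = S.src y ∨ u = S.tgt y) :
    loc S P u A x + loc S P u y A + loc S P u y x = ind (rkey S P u A x < rkey S P u A y) := by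
  have n1 := P.slope_ne u x y hxy hx hy
  have n2 := P.slope_ne u x A hAx hx hA
  have n3 := P.slope_ne u y A hAy hy hA
  have := loc_aux (P.up u A ↔ P.up u x) (P.up u A ↔ P.up u y) (P.slope u x) (P.slope u y)
    (P.slope u A) (fun h => n1 ((iff_side _ _ _).1 h).symm) (fun h => n2 h.symm) (fun h => n3 h.symm)
  have e2 : (P.up u y ↔ P.up u A) ↔ (P.up u A ↔ P.up u y) := iff_comm
  rw [iff_side] at this
  rw [loc, loc, loc, e2]
  exact this

end

/-- The parity data order overlapping edges from left to right.  Each edge `e` is completed to a cycle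
`C e` by a descending path from its source, an ascending path from its target, and the outer edge
`e0`; then `e` is to the left of `e'` if `e'` is on the inner side of `C e`, that is, if the crossing
parity `ω e e'` is `1`.  The edge `e0` itself is rightmost by convention.

The parity does not change when an edge ending in `v` is exchanged for one starting in `v`, as long
as the other edge passes `v` (`O4`): the cycles differ by closed chains entirely above or entirely
below `v`, which do not separate a passing edge from the outer face.  Antisymmetry (`tri`) and
transitivity (`tr`) follow by induction on the levels of the sources: the edge with the highest
source is replaced by the chosen edge entering that source, until all the sources coincide, where
the order is a rotation order (`same`, `loc_rkey`). -/
theorem exists_edgeOrder {V E : Type*} [Fintype E] (S : STGraph V E)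
    (P : Parity S.src S.tgt S.e0) : Nonempty (EdgeOrder S) := by
  obtain ⟨dn, D, hdn, hD⟩ := exists_down S
  obtain ⟨U, hU⟩ := exists_up S
  have flt := S.flt
  let C : E → E → ZMod 2 := fun e => D (S.src e) + one e + U (S.tgt e) + one S.e0
  have Ccyc : ∀ e, ECyc S.src S.tgt (C e) := by
    intro e F
    change pair S.src S.tgt (C e) F = 0
    simp only [C, pair_add, pair_one, (hD _).1, (hU _).1, S.src0, S.tgt0]
    linear_combination zmod2_add_self (F (S.src e)) + zmod2_add_self (F (S.tgt e)) +
      zmod2_add_self (F S.s) + zmod2_add_self (F S.t)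
  have D0 : ∀ v x, S.f v < S.f (S.tgt x) → D v x = 0 := fun v x h => by
    by_contra h'; have := (hD v).2.1 x h'; omega
  have U0 : ∀ v x, S.f (S.src x) < S.f v → U v x = 0 := fun v x h => by
    by_contra h'; have := (hU v).2 x h'; omega
  have C0 : ∀ e x, S.Ov e x → x ≠ e → x ≠ S.e0 → C e x = 0 := by
    intro e x hov h1 h2
    simp only [C, Pi.add_apply, one_ne h1, one_ne h2, D0 _ x hov.1, U0 _ x hov.2, add_zero]
  -- the cycle of `e` has no vertex at a level strictly between those of the ends of `e`
  have Coff : ∀ e v, S.Pass e v → ∀ z, C e z ≠ 0 → v ≠ S.src z ∧ v ≠ S.tgt z := by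
    rintro e v ⟨h1, h2⟩ z hz
    have := flt z
    have key : ∀ w, (w = S.src z ∨ w = S.tgt z) → S.f w ≤ S.f (S.src e) ∨
        S.f (S.tgt e) ≤ S.f w := by
      intro w hw
      by_contra! hcon
      apply hz
      have k1 : z ≠ e := by
        rintro rfl; rcases hw with rfl | rfl <;> omega
      have k2 : z ≠ S.e0 := by
        rintro rfl
        rw [S.src0, S.tgt0] at hw
        have a1 := S.hs (S.src e)
        have a2 := S.ht (S.tgt e)
        rcases hw with rfl | rfl <;> omega
      have k3 : D (S.src e) z = 0 := D0 _ _ (by rcases hw with rfl | rfl <;> omega)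
      have k4 : U (S.tgt e) z = 0 := U0 _ _ (by rcases hw with rfl | rfl <;> omega)
      simp only [C, Pi.add_apply, one_ne k1, one_ne k2, k3, k4, add_zero]
    constructor
    · intro h; have := key v (Or.inl h); omega
    · intro h; have := key v (Or.inr h); omega
  let ω : E → E → ZMod 2 := fun e e' => val S P (C e) (S.src e') e'
  -- exchanging an edge into `v` for an edge out of `v`
  have O4 : ∀ v e o e', S.tgt e = v → S.src o = v → S.Pass e' v →
      ω e e' = ω o e' ∧ ω e' e = ω e' o := by
    rintro v e o e' he ho hp
    have fe := flt e
    have fo := flt o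
    rw [he] at fe
    rw [ho] at fo
    constructor
    -- `C e + C o = Z1 + Z2`, with `Z1` below and `Z2` above the level of `v`
    · let Z1 := one e + D (S.src e) + D v
      let Z2 := one o + U (S.tgt o) + U v
      have c1 : ECyc S.src S.tgt Z1 := by
        intro F
        change pair S.src S.tgt Z1 F = 0
        simp only [Z1, pair_add, pair_one, (hD _).1, he]
        linear_combination zmod2_add_self (F (S.src e)) + zmod2_add_self (F v) +
          zmod2_add_self (F S.s)
      have c2 : ECyc S.src S.tgt Z2 := by
        intro F
        change pair S.src S.tgt Z2 F = 0
        simp only [Z2, pair_add, pair_one, (hU _).1, ho]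
        linear_combination zmod2_add_self (F (S.tgt o)) + zmod2_add_self (F v) +
          zmod2_add_self (F S.t)
      have b1 : ∀ z, Z1 z ≠ 0 → S.f (S.tgt z) ≤ S.f v := by
        intro z hz
        by_contra! hlt
        apply hz
        have k : z ≠ e := by rintro rfl; rw [he] at hlt; omega
        simp only [Z1, Pi.add_apply, one_ne k, D0 _ z hlt, D0 _ z (fe.trans hlt), add_zero]
      have b2 : ∀ z, Z2 z ≠ 0 → S.f v ≤ S.f (S.src z) := by
        intro z hz
        by_contra! hlt
        apply hz
        have k : z ≠ o := by rintro rfl; rw [ho] at hlt; omega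
        simp only [Z2, Pi.add_apply, one_ne k, U0 _ z hlt, U0 _ z (hlt.trans fo), add_zero]
      have v1 := val_high S P Z1 c1 _ b1 _ e' (Nat.sub_add_cancel (S.ht _)).symm hp.2
      rw [val, ← P.const Z1 c1 e' (by by_contra h; have := b1 _ h; have := hp.2; omega)] at v1
      have v2 := val_low S P Z2 c2 _ b2 _ e' rfl hp.1
      have hsum : C e + C o = Z1 + Z2 := by
        funext x
        simp only [C, Z1, Z2, Pi.add_apply, he, ho]
        linear_combination zmod2_add_self (one S.e0 x)
      have := val_add S P (C e) (C o) (S.src e') e'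
      rw [hsum, val_add, v2, val, v1, add_zero] at this
      change 0 = ω e e' + ω o e' at this
      exact zmod2_eq_of_add this.symm
    · have ne1 : e ≠ e' := by rintro rfl; have := hp.2; rw [he] at this; omega
      have ne2 : e ≠ S.e0 := by
        rintro rfl
        have h1 := hp.2
        have h2 := S.ht (S.tgt e')
        rw [S.tgt0] at he
        rw [← he] at h1
        omega
      have hov : S.Ov e' e := ⟨by rw [he]; exact hp.1, fe.trans hp.2⟩
      change val S P (C e') (S.src e) e = val S P (C e') (S.src o) o
      rw [val, P.const _ (Ccyc e') e (C0 e' e hov ne1 ne2), he, ho]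
      exact val_off S P (C e') v (Coff e' v hp) e o
  -- for edges with a common source `u`, `ω` is a local expression at `u`, up to a constant `k`; here
  -- `A` is the other edge at `u` of the cycles through `u`
  have same : ∀ u, ∃ (k : ZMod 2) (A : E), (u = S.src A ∨ u = S.tgt A) ∧
      ∀ e, S.src e = u → e ≠ S.e0 → e ≠ A ∧ ∀ e', S.src e' = u → e' ≠ S.e0 →
        ω e e' = k + loc S P u A e + loc S P u e' A + loc S P u e' e := by
    intro u
    let A : E := if u = S.s then S.e0 else dn u
    have hA : u = S.src A ∨ u = S.tgt A := by
      by_cases h : u = S.s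
      · left; simp only [A, if_pos h, S.src0, h]
      · right; simp only [A, if_neg h, hdn u h]
    have hne : ∀ e, S.src e = u → e ≠ S.e0 → e ≠ A := by
      intro e he h0
      by_cases h : u = S.s
      · simp only [A, if_pos h]; exact h0
      · simp only [A, if_neg h]
        rintro rfl
        have := flt (dn u)
        rw [hdn u h, he] at this
        omega
    have Cinc : ∀ e, S.src e = u → ∀ x, (u = S.src x ∨ u = S.tgt x) →
        C e x = one e x + one A x := by
      intro e he x hx
      have fe := flt e
      have fx := flt x
      rw [he] at fe
      have hU : U (S.tgt e) x = 0 := U0 _ _ (by rcases hx with rfl | rfl <;> omega)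
      simp only [C, Pi.add_apply, hU, add_zero, he]
      by_cases h : u = S.s
      · have hsx := S.hs (S.src x)
        have : D u x = 0 := D0 _ _ (by rw [h]; omega)
        simp only [A, if_pos h, this, zero_add]
      · have h0 : x ≠ S.e0 := by
          rintro rfl
          rw [S.src0, S.tgt0] at hx
          have := S.ht (S.tgt e)
          rcases hx with hx | hx
          · exact h hx
          · rw [hx] at fe; omega
        simp only [A, if_neg h, one_ne h0, add_zero]
        rcases hx with hx | hx
        · have k1 : x ≠ dn u := by
            rintro rfl
            rw [hdn u h, ← hx] at fx
            omega
          rw [one_ne k1, D0 _ _ (hx ▸ fx), add_zero, zero_add]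
        · rw [(hD u).2.2 x hx.symm h, add_comm]
    -- the crossings of the ray from `u`, as opposed to the contributions of the edges at `u`
    let n : E → ZMod 2 := fun e => ∑ y, C e y * P.N u y
    have vform : ∀ e, S.src e = u → ∀ x, val S P (C e) u x = n e + loc S P u x e +
        loc S P u x A := by
      intro e he x
      simp only [val, pval, mul_add, Finset.sum_add_distrib, n]
      rw [add_assoc]
      congr 1
      have : ∀ y, C e y * ind ((u = S.src y ∨ u = S.tgt y) ∧ (P.up u x ↔ P.up u y) ∧
          P.slope u x < P.slope u y) = one e y * loc S P u x y + one A y * loc S P u x y := by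
        intro y
        by_cases hy : u = S.src y ∨ u = S.tgt y
        · rw [Cinc e he y hy, add_mul]
          simp only [hy, true_and, loc]
        · have k1 : y ≠ e := by rintro rfl; exact hy (Or.inl he.symm)
          have k2 : y ≠ A := by rintro rfl; exact hy hA
          rw [ind_false (fun h => hy h.1), one_ne k1, one_ne k2]
          ring
      rw [Finset.sum_congr rfl (fun y _ => this y), Finset.sum_add_distrib, sum_one_mul,
        sum_one_mul]
    have nconst : ∀ e e', S.src e = u → S.src e' = u → e ≠ S.e0 → e' ≠ S.e0 →
        n e + loc S P u A e = n e' + loc S P u A e' := by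
      intro e e' he he' h0 h0'
      have fe := flt e
      have fe' := flt e'
      rw [he] at fe
      rw [he'] at fe'
      have hcy : ECyc S.src S.tgt (C e + C e') := by
        intro F
        change pair S.src S.tgt (C e + C e') F = 0
        rw [pair_add]
        have h1 : pair S.src S.tgt (C e) F = 0 := Ccyc e F
        have h2 : pair S.src S.tgt (C e') F = 0 := Ccyc e' F
        rw [h1, h2, add_zero]
      have hsup : ∀ z, S.f (S.src z) < S.f u → (C e + C e') z = 0 := by
        intro z hz
        have k1 : z ≠ e := by rintro rfl; rw [he] at hz; omega
        have k2 : z ≠ e' := by rintro rfl; rw [he'] at hz; omega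
        simp only [C, Pi.add_apply, one_ne k1, one_ne k2, he, he', U0 _ z (hz.trans fe),
          U0 _ z (hz.trans fe')]
        linear_combination zmod2_add_self (D u z) + zmod2_add_self (one S.e0 z)
      have hz : val S P (C e + C e') u A = 0 := by
        by_cases h : u = S.s
        · have hAe : A = S.e0 := if_pos h
          rw [hAe]
          refine P.outer _ hcy ?_ _ (Or.inl (h.trans S.src0.symm))
          have hx : u = S.src S.e0 ∨ u = S.tgt S.e0 := Or.inl (h.trans S.src0.symm)
          rw [Pi.add_apply, Cinc e he _ hx, Cinc e' he' _ hx, one_ne h0.symm, one_ne h0'.symm]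
          linear_combination zmod2_add_self (one A S.e0)
        · have hAe : A = dn u := if_neg h
          have hlt := flt (dn u)
          rw [hdn u h] at hlt
          have h1 := val_low S P _ hcy (S.f u) (fun z hz => by
            by_contra! h; exact hz (hsup z h)) _ (dn u) rfl hlt
          rw [val, P.const _ hcy _ (hsup _ hlt), hdn u h] at h1
          rw [hAe]
          exact h1
      rw [val_add, vform e he, vform e' he'] at hz
      exact add_right_cancel (zmod2_eq_of_add hz)
    by_cases hex : ∃ e1, S.src e1 = u ∧ e1 ≠ S.e0
    · obtain ⟨e1, h1, h2⟩ := hex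
      refine ⟨n e1 + loc S P u A e1, A, hA, fun e he h0 => ⟨hne e he h0, fun e' he' h0' => ?_⟩⟩
      change val S P (C e) (S.src e') e' = _
      rw [he', vform e he, ← nconst e e1 he h1 h0 h2]
      linear_combination -zmod2_add_self (loc S P u A e)
    · exact ⟨0, A, hA, fun e he h0 => absurd ⟨e, he, h0⟩ hex⟩
  have dn_props : ∀ e e', S.Ov e e' → S.f (S.src e) < S.f (S.src e') →
      S.Pass e (S.src e') ∧ S.tgt (dn (S.src e')) = S.src e' ∧ dn (S.src e') ≠ S.e0 := by
    intro e e' hov hlt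
    have hv : S.src e' ≠ S.s := by
      intro h; rw [h] at hlt; have := S.hs (S.src e); omega
    refine ⟨⟨hlt, hov.2⟩, hdn _ hv, ?_⟩
    intro h
    have h1 := hdn _ hv
    rw [h, S.tgt0] at h1
    have h2 := S.ht (S.tgt e')
    have h3 := flt e'
    rw [← h1] at h3
    omega
  have tri : ∀ n e e', S.f (S.src e) + S.f (S.src e') = n → S.Ov e e' → e ≠ e' → e ≠ S.e0 →
      e' ≠ S.e0 → ω e e' + ω e' e = 1 := by
    intro n
    induction n using Nat.strong_induction_on with
    | _ n ih =>
      have step : ∀ e e', S.f (S.src e) + S.f (S.src e') = n → S.Ov e e' → e ≠ e' → e ≠ S.e0 →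
          S.f (S.src e) < S.f (S.src e') → ω e e' + ω e' e = 1 := by
        intro e e' hn hov hne h0 hlt
        obtain ⟨hp, hd, hd0⟩ := dn_props e e' hov hlt
        have h1 := O4 _ (dn (S.src e')) e' e hd rfl hp
        have h2 := flt (dn (S.src e'))
        rw [hd] at h2
        rw [← h1.1, ← h1.2]
        refine ih (S.f (S.src e) + S.f (S.src (dn (S.src e')))) (by omega) e _ rfl
          ⟨by rw [hd]; exact hlt, h2.trans hov.2⟩ ?_ h0 hd0
        rintro h
        have := hp.2
        rw [h, hd] at this
        exact lt_irrefl _ this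
      intro e e' hn hov hne h0 h0'
      rcases lt_trichotomy (S.f (S.src e)) (S.f (S.src e')) with h | h | h
      · exact step e e' hn hov hne h0 h
      · have he := S.finj h
        obtain ⟨k, A, hA, hk⟩ := same (S.src e')
        obtain ⟨hA1, hk1⟩ := hk e he h0
        obtain ⟨hA2, hk2⟩ := hk e' rfl h0'
        rw [hk1 e' rfl h0', hk2 e he h0]
        have s1 := loc_add S P (S.src e') A e hA1.symm hA (Or.inl he.symm)
        have s2 := loc_add S P (S.src e') A e' hA2.symm hA (Or.inl rfl)
        have s3 := loc_add S P (S.src e') e e' hne (Or.inl he.symm) (Or.inl rfl)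
        have s4 := ind_side_sum (P.up (S.src e') A) (P.up (S.src e') e) (P.up (S.src e') e')
        linear_combination s1 + s2 + s3 + s4 + zmod2_add_self k
      · rw [add_comm]
        exact step e' e (by omega) ⟨hov.2, hov.1⟩ hne.symm h0' h
  have z01 : (1 : ZMod 2) + 1 ≠ 1 := by decide
  have tr : ∀ n a b c, S.f (S.src a) + S.f (S.src b) + S.f (S.src c) = n →
      S.Ov a b → S.Ov b c → S.Ov a c → a ≠ b → b ≠ c → a ≠ c → a ≠ S.e0 → b ≠ S.e0 → c ≠ S.e0 →
      ω a b = 1 → ω b c = 1 → ω a c = 1 := by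
    intro n
    induction n using Nat.strong_induction_on with
    | _ n ih =>
      intro a b c hn ab bc ac nab nbc nac a0 b0 c0 wab wbc
      have ovs : ∀ e e', S.Ov e e' → S.Ov e' e := fun e e' h => ⟨h.2, h.1⟩
      have rep : ∀ e e', S.Ov e e' → S.f (S.src e) < S.f (S.src e') → ∃ d, d = dn (S.src e') ∧
          ω d e = ω e' e ∧ ω e d = ω e e' ∧ S.Ov e d ∧ d ≠ e ∧ d ≠ S.e0 ∧
          S.f (S.src d) < S.f (S.src e') := by
        intro e e' hov hlt
        obtain ⟨hp, hd, hd0⟩ := dn_props e e' hov hlt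
        have h1 := O4 _ (dn (S.src e')) e' e hd rfl hp
        have h2 := flt (dn (S.src e'))
        rw [hd] at h2
        refine ⟨_, rfl, h1.1, h1.2, ⟨by rw [hd]; exact hlt, h2.trans hov.2⟩, ?_, hd0, h2⟩
        rintro h
        have := hp.2
        rw [← h, hd] at this
        exact lt_irrefl _ this
      have amax : S.f (S.src b) < S.f (S.src a) → S.f (S.src c) < S.f (S.src a) → ω a c = 1 := by
        intro h1 h2
        obtain ⟨d, hd, d1, d2, d3, d4, d5, d6⟩ := rep b a (ovs _ _ ab) h1
        obtain ⟨d', hd', d1', d2', d3', d4', d5', d6'⟩ := rep c a (ovs _ _ ac) h2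
        obtain rfl : d' = d := hd'.trans hd.symm
        rw [← d1']
        exact ih _ (by omega) d' b c rfl (ovs _ _ d3) bc (ovs _ _ d3') d4 nbc d4' d5 b0 c0
          (d1.trans wab) wbc
      have bmax : S.f (S.src a) < S.f (S.src b) → S.f (S.src c) < S.f (S.src b) → ω a c = 1 := by
        intro h1 h2
        obtain ⟨d, hd, d1, d2, d3, d4, d5, d6⟩ := rep a b ab h1
        obtain ⟨d', hd', d1', d2', d3', d4', d5', d6'⟩ := rep c b (ovs _ _ bc) h2
        obtain rfl : d' = d := hd'.trans hd.symm
        exact ih _ (by omega) a d' c rfl d3 (ovs _ _ d3') ac d4.symm d4' nac a0 d5 c0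
          (d2.trans wab) (d1'.trans wbc)
      have cmax : S.f (S.src a) < S.f (S.src c) → S.f (S.src b) < S.f (S.src c) → ω a c = 1 := by
        intro h1 h2
        obtain ⟨d, hd, d1, d2, d3, d4, d5, d6⟩ := rep a c ac h1
        obtain ⟨d', hd', d1', d2', d3', d4', d5', d6'⟩ := rep b c bc h2
        obtain rfl : d' = d := hd'.trans hd.symm
        rw [← d2]
        exact ih _ (by omega) a b d' rfl ab d3' d3 nab d4'.symm d4.symm a0 b0 d5
          wab (d2'.trans wbc)
      have abmax : S.f (S.src a) = S.f (S.src b) → S.f (S.src c) < S.f (S.src b) → ω a c = 1 := by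
        intro h1 h2
        obtain ⟨d, hd, d1, -⟩ := rep c a (ovs _ _ ac) (by omega)
        obtain ⟨d', hd', d1', -⟩ := rep c b (ovs _ _ bc) h2
        obtain rfl : d' = d := by rw [hd', hd, S.finj h1]
        rw [← d1, d1', wbc]
      have bcmax : S.f (S.src b) = S.f (S.src c) → S.f (S.src a) < S.f (S.src b) → ω a c = 1 := by
        intro h1 h2
        obtain ⟨d, hd, -, d1, -⟩ := rep a c ac (by omega)
        obtain ⟨d', hd', -, d1', -⟩ := rep a b ab h2
        obtain rfl : d' = d := by rw [hd', hd, S.finj h1]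
        rw [← d1, d1', wab]
      -- here `a` and `c` have the same replacement, so that `tri` gives a contradiction
      have acmax : S.f (S.src a) = S.f (S.src c) → S.f (S.src b) < S.f (S.src a) → ω a c = 1 := by
        intro h1 h2
        obtain ⟨d, hd, d1, d2, d3, d4, d5, -⟩ := rep b c bc (by omega)
        obtain ⟨d', hd', d1', -⟩ := rep b a (ovs _ _ ab) h2
        obtain rfl : d' = d := by rw [hd', hd, S.finj h1]
        have := tri _ b d' rfl d3 d4.symm b0 d5
        rw [d1', d2, wab, wbc] at this
        exact absurd this z01
      have eqmax : S.f (S.src a) = S.f (S.src b) → S.f (S.src c) = S.f (S.src b) → ω a c = 1 := by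
        intro h1 h2
        have h1 := S.finj h1
        have h2 := S.finj h2
        obtain ⟨k, A, hA, hk⟩ := same (S.src b)
        obtain ⟨hAa, ha⟩ := hk a h1 a0
        obtain ⟨hAb, hb⟩ := hk b rfl b0
        obtain ⟨hAc, -⟩ := hk c h2 c0
        rw [ha b rfl b0] at wab
        rw [hb c h2 c0] at wbc
        rw [ha c h2 c0]
        have r1 := loc_rkey S P (S.src b) A a b hAa hAb nab hA (Or.inl h1.symm) (Or.inl rfl)
        have r2 := loc_rkey S P (S.src b) A b c hAb hAc nbc hA (Or.inl rfl) (Or.inl h2.symm)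
        have r3 := loc_rkey S P (S.src b) A a c hAa hAc nac hA (Or.inl h1.symm) (Or.inl h2.symm)
        rw [add_assoc, add_assoc, ← add_assoc (loc S P _ _ _), r1] at wab
        rw [add_assoc, add_assoc, ← add_assoc (loc S P _ _ _), r2] at wbc
        rw [add_assoc, add_assoc, ← add_assoc (loc S P _ _ _), r3]
        -- the constant `k` decides between the rotation order and its reverse
        rcases zmod2_cases k with rfl | rfl
        · by_cases q1 : rkey S P (S.src b) A a < rkey S P (S.src b) A b
          · by_cases q2 : rkey S P (S.src b) A b < rkey S P (S.src b) A c
            · rw [ind_true (q1.trans q2)]; rfl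
            · rw [ind_false q2] at wbc; exact absurd wbc (by decide)
          · rw [ind_false q1] at wab; exact absurd wab (by decide)
        · by_cases q1 : rkey S P (S.src b) A a < rkey S P (S.src b) A b
          · rw [ind_true q1] at wab; exact absurd wab z01
          · by_cases q2 : rkey S P (S.src b) A b < rkey S P (S.src b) A c
            · rw [ind_true q2] at wbc; exact absurd wbc z01
            · rw [ind_false (not_lt.2 ((not_lt.1 q2).trans (not_lt.1 q1)))]; rfl
      rcases lt_trichotomy (S.f (S.src a)) (S.f (S.src b)) with h1 | h1 | h1 <;>
        rcases lt_trichotomy (S.f (S.src c)) (S.f (S.src b)) with h2 | h2 | h2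
      · exact bmax h1 h2
      · exact bcmax h2.symm h1
      · exact cmax (h1.trans h2) h2
      · exact abmax h1 h2
      · exact eqmax h1 h2
      · exact cmax (h1 ▸ h2) h2
      · exact amax h1 (h2.trans h1)
      · exact amax h1 (h2 ▸ h1)
      · rcases lt_trichotomy (S.f (S.src a)) (S.f (S.src c)) with h3 | h3 | h3
        · exact cmax h3 h2
        · exact acmax h3 h1
        · exact amax h1 h3
  have pass0 : ∀ e v, S.Pass e v → v ≠ S.s ∧ v ≠ S.t := by
    rintro e v ⟨h1, h2⟩
    have := S.hs (S.src e)
    have := S.ht (S.tgt e)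
    constructor <;> rintro rfl <;> omega
  have inc0 : ∀ e v e', (S.src e = v ∨ S.tgt e = v) → S.Pass e' v → e ≠ S.e0 := by
    rintro e v e' he hp rfl
    rw [S.src0, S.tgt0] at he
    have := pass0 _ _ hp
    rcases he with rfl | rfl
    · exact this.1 rfl
    · exact this.2 rfl
  have inc1 : ∀ e v e', (S.src e = v ∨ S.tgt e = v) → S.Pass e' v → e ≠ e' := by
    rintro e v e' he hp rfl
    rcases he with rfl | rfl
    · exact lt_irrefl _ hp.1
    · exact lt_irrefl _ hp.2
  have tri' : ∀ e e', S.Ov e e' → e ≠ e' → e ≠ S.e0 → e' ≠ S.e0 → (ω e e' = 1 ↔ ¬ ω e' e = 1) := by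
    intro e e' h1 h2 h3 h4
    have := tri _ e e' rfl h1 h2 h3 h4
    rcases zmod2_cases (ω e e') with h | h <;> rcases zmod2_cases (ω e' e) with h' | h' <;>
      rw [h, h'] at this ⊢ <;> revert this <;> decide
  refine ⟨⟨fun e e' => e ≠ e' ∧ e ≠ S.e0 ∧ (e' = S.e0 ∨ ω e e' = 1), ?_, ?_, ?_, ?_, ?_⟩⟩
  · exact fun e h => h.1 rfl
  · intro e e' hov hne
    by_cases h0 : e = S.e0
    · subst h0; simp [hne.symm]
    by_cases h0' : e' = S.e0
    · subst h0'; simp [hne]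
    simp only [ne_eq, hne, hne.symm, h0, h0', not_false_eq_true, true_and, false_or]
    exact tri' e e' hov hne h0 h0'
  · rintro a b c ab bc ac ⟨n1, a0, h1⟩ ⟨n2, b0, h2⟩
    have h1 := h1.resolve_left b0
    have nac : a ≠ c := by
      rintro rfl
      exact (tri' a b ab n1 a0 b0).1 h1 (h2.resolve_left a0)
    refine ⟨nac, a0, ?_⟩
    by_cases c0 : c = S.e0
    · exact Or.inl c0
    · exact Or.inr (tr _ a b c rfl ab bc ac n1 n2 nac a0 b0 c0 h1 (h2.resolve_left c0))
  · intro v e o e' he ho hp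
    have := O4 v e o e' he ho hp
    simp only [ne_eq, inc0 e v e' (Or.inr he) hp, inc0 o v e' (Or.inl ho) hp,
      inc1 e v e' (Or.inr he) hp, inc1 o v e' (Or.inl ho) hp, this.1]
  · intro v e o e' he ho hp
    have := O4 v e o e' he ho hp
    simp only [ne_eq, inc0 e v e' (Or.inr he) hp, inc0 o v e' (Or.inl ho) hp,
      (inc1 e v e' (Or.inr he) hp).symm, (inc1 o v e' (Or.inl ho) hp).symm, this.2]

end OctiProof

/-! ### Ports and abscissas -/

namespace OctiProof

open Finset Classical

/-- The endvertex of `e` on side `b`: the source for `false`, the target for `true`. -/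
def STGraph.vt {V E : Type*} (S : STGraph V E) (e : E) (b : Bool) : V :=
  if b then S.tgt e else S.src e

/-- Combinatorial data of an octilinear drawing: the port `δ e b` used by `e` at its endvertex on
side `b` (with `0` vertical, `±1` diagonal, `±2` horizontal, and `3` the diagonal pointing backwards
to the right), the abscissa `X e` of the vertical part of `e`, and the abscissa `x v` of `v`. -/
structure Coords {V E : Type*} (S : STGraph V E) where
  X : E → ℤ
  x : V → ℤ
  δ : E → Bool → ℤ
  lo : ∀ e b, -2 ≤ δ e b
  hi : ∀ e b, δ e b ≤ 3
  inj : ∀ e e', S.Ov e e' → e ≠ e' → X e ≠ X e'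
  mono : ∀ e e' b, S.vt e b = S.vt e' b → (X e < X e' ↔ δ e b < δ e' b)
  pos : ∀ e b, x (S.vt e b) < X e ↔ 0 < δ e b
  neg : ∀ e b, X e < x (S.vt e b) ↔ δ e b < 0
  excl : ∀ e e' b, S.vt e b = S.vt e' (!b) → (δ e b = 2 ∨ δ e b = -2) →
    (δ e' (!b) = 2 ∨ δ e' (!b) = -2) → False
  three : ∀ e e' b, S.vt e b = S.vt e' (!b) → δ e b ≠ 3
  pass_ne : ∀ e v, S.Pass e v → X e ≠ x v
  pass_lt : ∀ e v, S.Pass e v → ∀ e' b, S.vt e' b = v → (X e < X e' ↔ X e < x v)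
  pass_gt : ∀ e v, S.Pass e v → ∀ e' b, S.vt e' b = v → (X e' < X e ↔ x v < X e)

/-- Ranks in a finite linear order, given by its restriction to `T`: the rank `#{z ∈ T | z < e}` is
strictly monotone and takes all the values below `#T`. -/
theorem rank_props {E : Type*} (T : Finset E) (lt : E → E → Prop) (irrefl : ∀ e, ¬ lt e e)
    (total : ∀ a ∈ T, ∀ b ∈ T, a ≠ b → (lt a b ↔ ¬ lt b a))
    (trans : ∀ a ∈ T, ∀ b ∈ T, ∀ c ∈ T, lt a b → lt b c → lt a c) :
    (∀ e ∈ T, (T.filter (fun a => lt a e)).card < T.card) ∧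
    (∀ a ∈ T, ∀ b ∈ T, (lt a b ↔ (T.filter (fun z => lt z a)).card < (T.filter (fun z => lt z b)).card)) ∧
    (∀ j < T.card, ∃ e ∈ T, (T.filter (fun z => lt z e)).card = j) := by
  have h1 : ∀ e ∈ T, (T.filter (fun a => lt a e)).card < T.card := fun e he =>
    Finset.card_lt_card (Finset.filter_ssubset.2 ⟨e, he, irrefl e⟩)
  have h2 : ∀ a ∈ T, ∀ b ∈ T, lt a b →
      (T.filter (fun z => lt z a)).card < (T.filter (fun z => lt z b)).card := by
    intro a ha b hb hab
    apply Finset.card_lt_card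
    refine (Finset.ssubset_iff_of_subset ?_).2 ⟨a, by simp [ha, hab], by simp [irrefl]⟩
    intro z hz
    rw [Finset.mem_filter] at hz ⊢
    exact ⟨hz.1, trans z hz.1 a ha b hb hz.2 hab⟩
  refine ⟨h1, fun a ha b hb => ⟨h2 a ha b hb, fun h => ?_⟩, fun j hj => ?_⟩
  · by_contra hn
    have hne : a ≠ b := by rintro rfl; exact lt_irrefl _ h
    have := h2 b hb a ha (by_contra fun h' => hn ((total a ha b hb hne).2 h'))
    omega
  · have := Finset.surjOn_of_injOn_of_card_le (s := T) (t := Finset.range T.card)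
      (fun e => (T.filter (fun z => lt z e)).card)
      (fun e he => by simpa using h1 e he) ?_ (by simp)
    · obtain ⟨e, he, h⟩ := this (show j ∈ (Finset.range T.card : Set ℕ) by simpa using hj)
      exact ⟨e, he, h⟩
    · intro a ha b hb hab
      by_contra hne
      simp only at hab
      by_cases h : lt a b
      · have := h2 a ha b hb h; omega
      · have := h2 b hb a ha (by_contra fun h' => h ((total a ha b hb hne).2 h')); omega

/-- The number of edges placed to the left of the vertical port, among `k` edges on one side. -/
def leftCount (k : ℕ) : ℤ := if k ≤ 1 then 0 else if k ≤ 4 then 1 else 2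

/-- Ports are assigned from left to right at every vertex, the rank being shifted so that some edge
always gets the vertical port `0`.  Since the degree is at most `6`, ports lie between `-2` and `3`;
port `3` occurs only if all six edges are on one side, and horizontal ports are used on one side
only (this needs at least four edges there).

Abscissas are chosen by inserting the vertices in the order of their levels: a vertex is placed on
the line of its central incoming edge, at abscissa `c` say, all abscissas are multiplied by `8`, and
an outgoing edge gets the abscissa `8 * c + δ`, which keeps it between the neighbouring lines. -/
theorem exists_coords {V E : Type*} [Fintype E] (S : STGraph V E) (O : EdgeOrder S)
    (hdeg : ∀ v, (univ.filter (fun e => S.src e = v)).card +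
      (univ.filter (fun e => S.tgt e = v)).card ≤ 6) : Nonempty (Coords S) := by
  let T : V → Bool → Finset E := fun v b => univ.filter (fun e => S.vt e b = v)
  let δ : E → Bool → ℤ := fun e b =>
    (((T (S.vt e b) b).filter (fun z => O.lt z e)).card : ℤ) - leftCount (T (S.vt e b) b).card
  have flt := S.flt
  have ovs : ∀ e e' b, S.vt e b = S.vt e' b → S.Ov e e' := by
    intro e e' b h
    have h1 := flt e
    have h2 := flt e'
    cases b
    · have h : S.src e = S.src e' := h
      exact ⟨by rw [h]; exact h2, by rw [← h]; exact h1⟩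
    · have h : S.tgt e = S.tgt e' := h
      exact ⟨by rw [← h]; exact h1, by rw [h]; exact h2⟩
  have rp := fun v b => rank_props (T v b) O.lt O.irrefl
    (fun a ha c hc hne => O.total a c (ovs a c b (by simp [T] at ha hc; rw [ha, hc])) hne)
    (fun a ha c hc d hd => O.trans a c d (ovs a c b (by simp [T] at ha hc; rw [ha, hc]))
      (ovs c d b (by simp [T] at hc hd; rw [hc, hd])) (ovs a d b (by simp [T] at ha hd; rw [ha, hd])))
  have memT : ∀ e b, e ∈ T (S.vt e b) b := fun e b => by simp [T]
  have cT : ∀ v b, (T v b).card + (T v (!b)).card ≤ 6 := by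
    intro v b
    have := hdeg v
    cases b
    · exact this
    · rw [add_comm]; exact this
  have rlt : ∀ e b, (((T (S.vt e b) b).filter (fun z => O.lt z e)).card) < (T (S.vt e b) b).card :=
    fun e b => (rp _ b).1 e (memT e b)
  have δlo : ∀ e b, -2 ≤ δ e b := by
    intro e b
    simp only [δ, leftCount]
    split_ifs <;> omega
  have δhi : ∀ e b, δ e b ≤ 3 := by
    intro e b
    have h1 := rlt e b
    have h2 := cT (S.vt e b) b
    simp only [δ, leftCount]
    split_ifs <;> omega
  have δ3 : ∀ e b, δ e b = 3 → 6 ≤ (T (S.vt e b) b).card := by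
    intro e b h
    have h1 := rlt e b
    have h2 := cT (S.vt e b) b
    simp only [δ, leftCount] at h
    split_ifs at h <;> omega
  have δ2 : ∀ e b, (δ e b = 2 ∨ δ e b = -2) → 4 ≤ (T (S.vt e b) b).card := by
    intro e b h
    have h1 := rlt e b
    simp only [δ, leftCount] at h
    split_ifs at h <;> omega
  have δmono : ∀ e e' b, S.vt e b = S.vt e' b → (O.lt e e' ↔ δ e b < δ e' b) := by
    intro e e' b h
    rw [(rp (S.vt e b) b).2.1 e (memT e b) e' (h ▸ memT e' b)]
    simp only [δ, h]
    omega
  have δzero : ∀ e b, ∃ m, S.vt m b = S.vt e b ∧ δ m b = 0 := by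
    intro e b
    have hc : 0 < (T (S.vt e b) b).card := Finset.card_pos.2 ⟨e, memT e b⟩
    obtain ⟨m, hm, hr⟩ := (rp (S.vt e b) b).2.2 (leftCount (T (S.vt e b) b).card).toNat (by
      simp only [leftCount]; split_ifs <;> omega)
    have hm' : S.vt m b = S.vt e b := by simpa [T] using hm
    refine ⟨m, hm', ?_⟩
    simp only [δ, hm', hr]
    simp only [leftCount]; split_ifs <;> simp
  have vtin : ∀ e, S.vt e true = S.tgt e := fun e => rfl
  have vtout : ∀ e, S.vt e false = S.src e := fun e => rfl
  have main : ∀ n, ∃ (X : E → ℤ) (x : V → ℤ),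
      (∀ e e', S.f (S.src e) < n → S.f (S.src e') < n → S.Ov e e' → O.lt e e' → X e < X e') ∧
      (∀ e b, S.f (S.src e) < n → S.f (S.vt e b) < n →
        ((x (S.vt e b) < X e ↔ 0 < δ e b) ∧ (X e < x (S.vt e b) ↔ δ e b < 0))) := by
    intro n
    induction n with
    | zero => exact ⟨0, 0, by simp, by simp⟩
    | succ n ih =>
      obtain ⟨X, x, h1, h2⟩ := ih
      by_cases hv : ∃ v, S.f v = n
      swap
      · have hlt : ∀ v, S.f v < n + 1 → S.f v < n := fun v h => by
          have : S.f v ≠ n := fun h => hv ⟨v, h⟩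
          omega
        exact ⟨X, x, fun e e' a b => h1 e e' (hlt _ a) (hlt _ b),
          fun e b a c => h2 e b (hlt _ a) (hlt _ c)⟩
      obtain ⟨v, rfl⟩ := hv
      have hlt : ∀ w, w ≠ v → S.f w < S.f v + 1 → S.f w < S.f v := fun w h h' => by
        have : S.f w ≠ S.f v := fun h'' => h (S.finj h'')
        omega
      -- the new vertex is placed on the vertical line of its central incoming edge
      obtain ⟨c, hc⟩ : ∃ c : ℤ, (∀ e, S.f (S.src e) < S.f v → ∃ m, S.tgt m = v ∧ δ m true = 0 ∧
          X m = c) := by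
        by_cases hin : ∃ e, S.tgt e = v
        · obtain ⟨e, he⟩ := hin
          obtain ⟨m, hm, hm0⟩ := δzero e true
          exact ⟨X m, fun _ _ => ⟨m, hm.trans he, hm0, rfl⟩⟩
        · refine ⟨0, fun e he => ?_⟩
          have : v ≠ S.s := by rintro rfl; have := S.hs (S.src e); omega
          exact absurd (S.hin v this) hin
      refine ⟨fun e => if S.src e = v then 8 * c + δ e false else 8 * X e,
        fun w => if w = v then 8 * c else 8 * x w, ?_, ?_⟩
      · intro e e' he he' hov hl
        by_cases k : S.src e = v <;> by_cases k' : S.src e' = v <;> simp only [k, k', if_true, if_false]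
        · have := (δmono e e' false (k.trans k'.symm)).1 hl
          omega
        · have hf := hlt _ k' he'
          obtain ⟨m, hm, hm0, rfl⟩ := hc e' hf
          have fm := flt m
          rw [hm] at fm
          have hp : S.Pass e' v := ⟨hf, k ▸ hov.1⟩
          have := h1 m e' fm hf ⟨fm.trans hp.2, by rw [hm]; exact hf⟩ ((O.left v m e e' hm k hp).2 hl)
          have := δhi e false
          omega
        · have hf := hlt _ k he
          obtain ⟨m, hm, hm0, rfl⟩ := hc e hf
          have fm := flt m
          rw [hm] at fm
          have hp : S.Pass e v := ⟨hf, k' ▸ hov.2⟩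
          have := h1 e m hf fm ⟨by rw [hm]; exact hf, fm.trans hp.2⟩
            ((O.right v m e' e hm k' hp).2 hl)
          have := δlo e' false
          omega
        · have := h1 e e' (hlt _ k he) (hlt _ k' he') hov hl
          omega
      · intro e b he hb
        by_cases k : S.src e = v
        · have hbf : b = false := by
            cases b
            · rfl
            · have h3 := flt e
              rw [k] at h3
              rw [vtin] at hb
              omega
          subst hbf
          rw [vtout]
          simp only [k, if_true]
          omega
        · have hf := hlt _ k he
          by_cases kb : S.vt e b = v
          · have hbt : b = true := by
              cases b
              · exact absurd kb k
              · rfl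
            subst hbt
            rw [vtin] at *
            obtain ⟨m, hm, hm0, rfl⟩ := hc e hf
            simp only [k, kb, if_true, if_false]
            have fm := flt m
            rw [hm] at fm
            have hvt : S.vt m true = S.vt e true := hm.trans kb.symm
            have q1 := h1 m e fm hf (ovs _ _ _ hvt)
            have q2 := h1 e m hf fm (ovs _ _ _ hvt.symm)
            rw [δmono m e true hvt, hm0] at q1
            rw [δmono e m true hvt.symm, hm0] at q2
            have q3 : δ e true = 0 → e = m := by
              intro h0
              by_contra hne
              have t1 := O.total e m (ovs _ _ _ hvt.symm) hne
              rw [δmono m e true hvt, δmono e m true hvt.symm, hm0, h0] at t1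
              simp at t1
            rcases lt_trichotomy (δ e true) 0 with h | h | h
            · have := q2 h; omega
            · rw [← q3 h]; omega
            · have := q1 h; omega
          · have := h2 e b hf (hlt _ kb hb)
            simp only [k, kb, if_false]
            omega
  obtain ⟨X, x, h1, h2⟩ := main (S.f S.t + 1)
  have ft : ∀ v, S.f v < S.f S.t + 1 := fun v => Nat.lt_succ_of_le (S.ht v)
  replace h1 := fun e e' => h1 e e' (ft _) (ft _)
  replace h2 := fun e b => h2 e b (ft _) (ft _)
  have tot : ∀ e e', S.Ov e e' → e ≠ e' → O.lt e e' ∨ O.lt e' e := by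
    intro e e' h hne
    have := O.total e e' h hne
    tauto
  have sym : ∀ e e', S.Ov e e' → S.Ov e' e := fun e e' h => ⟨h.2, h.1⟩
  have iff1 : ∀ e e', S.Ov e e' → (X e < X e' ↔ O.lt e e') := by
    intro e e' hov
    refine ⟨fun h => ?_, h1 e e' hov⟩
    have hne : e ≠ e' := by rintro rfl; exact lt_irrefl _ h
    rcases tot e e' hov hne with h' | h'
    · exact h'
    · have := h1 _ _ (sym _ _ hov) h'; omega
  have pass : ∀ e v, S.Pass e v → (X e < x v ∨ x v < X e) ∧ ∀ e' b, S.vt e' b = v →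
      (X e < x v → X e < X e') ∧ (x v < X e → X e' < X e) := by
    intro e v hp
    have hs : v ≠ S.s := by rintro rfl; have := S.hs (S.src e); have := hp.1; omega
    have ht : v ≠ S.t := by rintro rfl; have := S.ht (S.tgt e); have := hp.2; omega
    obtain ⟨i, hi⟩ := S.hin v hs
    obtain ⟨o, ho⟩ := S.hout v ht
    obtain ⟨m, hm, hm0⟩ := δzero i true
    have hmv : S.vt m true = v := hm.trans hi
    have hxm : X m = x v := by
      have := h2 m true
      rw [hm0, hmv] at this
      omega
    have ovi : ∀ e' b, S.vt e' b = v → S.Ov e e' := by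
      intro e' b hb
      have := flt e'
      obtain ⟨p1, p2⟩ := hp
      cases b
      · rw [vtout] at hb; rw [← hb] at p1 p2; exact ⟨by omega, by omega⟩
      · rw [vtin] at hb; rw [← hb] at p1 p2; exact ⟨by omega, by omega⟩
    have tr : ∀ e' b, S.vt e' b = v → (O.lt e e' ↔ O.lt e m) ∧ (O.lt e' e ↔ O.lt m e) := by
      intro e' b hb
      cases b
      · exact ⟨(O.right v m e' e hmv hb hp).symm, (O.left v m e' e hmv hb hp).symm⟩
      · exact ⟨(O.right v e' o e hb ho hp).trans (O.right v m o e hmv ho hp).symm,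
          (O.left v e' o e hb ho hp).trans (O.left v m o e hmv ho hp).symm⟩
    have hne : e ≠ m := by
      rintro rfl
      have := hp.2
      rw [← hmv, vtin] at this
      exact lt_irrefl _ this
    have ovm := ovi m true hmv
    refine ⟨?_, fun e' b hb => ?_⟩
    · rw [← hxm]
      rcases tot e m ovm hne with h | h
      · exact Or.inl (h1 _ _ ovm h)
      · exact Or.inr (h1 _ _ (sym _ _ ovm) h)
    · have ove := ovi e' b hb
      rw [← hxm, iff1 e m ovm, iff1 m e (sym _ _ ovm), iff1 e e' ove, iff1 e' e (sym _ _ ove),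
        (tr e' b hb).1, (tr e' b hb).2]
      exact ⟨id, id⟩
  refine ⟨⟨X, x, δ, δlo, δhi, ?_, ?_, fun e b => (h2 e b).1, fun e b => (h2 e b).2, ?_, ?_, ?_, ?_, ?_⟩⟩
  · intro e e' hov hne
    rcases tot e e' hov hne with h | h
    · exact (h1 _ _ hov h).ne
    · exact (h1 _ _ (sym _ _ hov) h).ne'
  · intro e e' b h
    rw [iff1 e e' (ovs _ _ _ h), δmono e e' b h]
  · intro e e' b h a c
    have q1 := δ2 e b a
    have q2 := δ2 e' (!b) c
    have := cT (S.vt e b) b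
    rw [← h] at q2
    omega
  · intro e e' b h a
    have q1 := δ3 e b a
    have q2 : 0 < (T (S.vt e b) (!b)).card := Finset.card_pos.2 ⟨e', h ▸ memT e' (!b)⟩
    have := cT (S.vt e b) b
    omega
  · intro e v hp
    have := (pass e v hp).1
    omega
  · intro e v hp e' b hb
    obtain ⟨p1, p2⟩ := pass e v hp
    have := p2 e' b hb
    omega
  · intro e v hp e' b hb
    obtain ⟨p1, p2⟩ := pass e v hp
    have := p2 e' b hb
    omega

end OctiProof

/-! ### Octilinear polylines with at most three segments -/

namespace OctiProof

open Finset Classical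

/-- At `b` a vertical segment meets a non-vertical one. -/
def Corner (a b c : ℝ × ℝ) : Prop :=
  (a.1 ≠ b.1 ∧ b.1 = c.1 ∧ b.2 ≠ c.2) ∨ (a.1 = b.1 ∧ a.2 ≠ b.2 ∧ b.1 ≠ c.1)

theorem Corner.symm {a b c : ℝ × ℝ} (h : Corner a b c) : Corner c b a := by
  rcases h with ⟨h1, h2, h3⟩ | ⟨h1, h2, h3⟩
  · exact Or.inr ⟨h2.symm, h3.symm, h1.symm⟩
  · exact Or.inl ⟨h3.symm, h1.symm, h2.symm⟩

theorem Corner.not_collinear {a b c : ℝ × ℝ} (h : Corner a b c) :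
    ¬ Collinear ℝ ({a, b, c} : Set (ℝ × ℝ)) := by
  intro hc
  rw [collinear_iff_of_mem (p₀ := b) (by simp)] at hc
  obtain ⟨v, hv⟩ := hc
  obtain ⟨r, hr⟩ := hv a (by simp)
  obtain ⟨q, hq⟩ := hv c (by simp)
  have hr1 : a.1 = r * v.1 + b.1 := by rw [hr]; simp
  have hr2 : a.2 = r * v.2 + b.2 := by rw [hr]; simp
  have hq1 : c.1 = q * v.1 + b.1 := by rw [hq]; simp
  have hq2 : c.2 = q * v.2 + b.2 := by rw [hq]; simp
  rcases h with ⟨h1, h2, h3⟩ | ⟨h1, h2, h3⟩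
  · have : q * v.1 = 0 := by linarith
    rcases mul_eq_zero.1 this with h | h
    · apply h3; rw [hq2, h]; ring
    · apply h1; rw [hr1, h]; ring
  · have : r * v.1 = 0 := by linarith
    rcases mul_eq_zero.1 this with h | h
    · apply h2; rw [hr2, h]; ring
    · apply h3; rw [hq1, h]; ring

theorem Corner.inter {a b c p : ℝ × ℝ} (h : Corner a b c) (h1 : p ∈ segment ℝ a b)
    (h2 : p ∈ segment ℝ b c) : p = b := by
  wlog hw : a.1 ≠ b.1 ∧ b.1 = c.1 ∧ b.2 ≠ c.2 generalizing a c
  · refine this h.symm (by rwa [segment_symm]) (by rwa [segment_symm]) ?_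
    rcases h with h | h
    · exact absurd h hw
    · exact ⟨h.2.2.symm, h.1.symm, h.2.1.symm⟩
  rw [segment_eq_image'] at h1 h2
  obtain ⟨t, _, rfl⟩ := h1
  obtain ⟨r, _, hr⟩ := h2
  have e1 := congrArg Prod.fst hr
  simp only [Prod.fst_add, Prod.smul_fst, Prod.fst_sub, smul_eq_mul] at e1
  rw [← hw.2.1] at e1
  have : (1 - t) * (a.1 - b.1) = 0 := by linarith
  rcases mul_eq_zero.1 this with h | h
  · have : t = 1 := by linarith
    simp [this]
  · exact absurd (by linarith) hw.1

/-- A polyline is simple if consecutive segments form corners and other pairs of segments are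
disjoint. -/
theorem simple_of {P : Polyline} (h1 : ∀ i < P.len, P.pt i ≠ P.pt (i + 1))
    (h2 : ∀ i, i + 1 < P.len → Corner (P.pt i) (P.pt (i + 1)) (P.pt (i + 2)))
    (h3 : ∀ i j, i + 1 < j → j < P.len → ∀ p ∈ segment ℝ (P.pt i) (P.pt (i + 1)),
      p ∉ segment ℝ (P.pt j) (P.pt (j + 1))) : P.Simple := by
  have inj : ∀ i < P.len, ∀ t r : ℝ, P.pt i + t • (P.pt (i + 1) - P.pt i) =
      P.pt i + r • (P.pt (i + 1) - P.pt i) → t = r := by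
    intro i hi t r h
    have : (t - r) • (P.pt (i + 1) - P.pt i) = 0 := by
      rw [sub_smul, sub_eq_zero]; exact add_left_cancel h
    rcases smul_eq_zero.1 this with h | h
    · linarith
    · exact absurd (sub_eq_zero.1 h).symm (h1 i hi)
  have key : ∀ i < P.len, ∀ j < P.len, i ≤ j → ∀ t r : ℝ, 0 ≤ t → t ≤ 1 → 0 ≤ r → r ≤ 1 →
      P.param (i + t) = P.param (j + r) → (i : ℝ) + t = j + r := by
    intro i hi j hj hij t r t0 t1 r0 r1 h
    have m1 := (mem_seg_iff P i (P.param (i + t))).2 ⟨t, t0, t1, rfl⟩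
    have m2 := (mem_seg_iff P j (P.param (i + t))).2 ⟨r, r0, r1, h.symm⟩
    rcases hij.eq_or_lt with rfl | hij
    · rw [param_add P i t0 t1, param_add P i r0 r1] at h
      rw [inj i hi t r h]
    rcases (Nat.succ_le_of_lt hij).eq_or_lt with rfl | hij
    · have hp := (h2 i hj).inter m1 m2
      have ht : t = 1 := inj i hi t 1 (by rw [← param_add P i t0 t1, hp]; simp)
      have hr : r = 0 := inj _ hj r 0 (by rw [← param_add P _ r0 r1, ← h, hp]; simp)
      rw [ht, hr]; push_cast; ring
    · exact absurd m2 (h3 i j hij hj _ m1)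
  intro s hs s' hs' h
  obtain ⟨i, hi, t, t0, t1, rfl⟩ := exists_split P hs
  obtain ⟨j, hj, r, r0, r1, rfl⟩ := exists_split P hs'
  rcases le_total i j with hij | hij
  · exact key i hi j hj hij t r t0 t1 r0 r1 h
  · exact (key j hj i hi hij r t r0 r1 t0 t1 h.symm).symm

/-- The polyline `a, b, c, d` with a vertical middle segment, in which the first or the last segment
is omitted when it degenerates to a point. -/
theorem exists_poly (a b c d : ℝ × ℝ) (hbc : b.1 = c.1) (hbc2 : b.2 < c.2)
    (hab : a = b ∨ (a.1 ≠ b.1 ∧ Polyline.OctiSeg a b))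
    (hcd : c = d ∨ (c.1 ≠ d.1 ∧ Polyline.OctiSeg c d))
    (hdis : ∀ p ∈ segment ℝ a b, p ∉ segment ℝ c d) :
    ∃ P : Polyline, P.pt 0 = a ∧ P.pt P.len = d ∧ P.len ≤ 3 ∧ P.Octilinear ∧ P.Simple ∧
      ∀ p ∈ P.image, p ∈ segment ℝ a b ∨ p ∈ segment ℝ b c ∨ p ∈ segment ℝ c d := by
  have main : ∀ P : Polyline, P.pt 0 = a → P.pt P.len = d → P.len ≤ 3 →
      (∀ i < P.len, P.pt i ≠ P.pt (i + 1) ∧ Polyline.OctiSeg (P.pt i) (P.pt (i + 1))) →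
      (∀ i, i + 1 < P.len → Corner (P.pt i) (P.pt (i + 1)) (P.pt (i + 2))) →
      (∀ i j, i + 1 < j → j < P.len → ∀ p ∈ segment ℝ (P.pt i) (P.pt (i + 1)),
        p ∉ segment ℝ (P.pt j) (P.pt (j + 1))) →
      (∀ i < P.len, ∀ p ∈ segment ℝ (P.pt i) (P.pt (i + 1)),
        p ∈ segment ℝ a b ∨ p ∈ segment ℝ b c ∨ p ∈ segment ℝ c d) →
      ∃ P : Polyline, P.pt 0 = a ∧ P.pt P.len = d ∧ P.len ≤ 3 ∧ P.Octilinear ∧ P.Simple ∧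
        ∀ p ∈ P.image, p ∈ segment ℝ a b ∨ p ∈ segment ℝ b c ∨ p ∈ segment ℝ c d := by
    intro P h0 hl h3 hs hc hd hi
    refine ⟨P, h0, hl, h3, ⟨⟨fun i h => (hs i h).1, fun i h => (hc i h).not_collinear⟩,
      fun i h => (hs i h).2⟩, simple_of (fun i h => (hs i h).1) hc hd, fun p hp => ?_⟩
    obtain ⟨i, hil, hp⟩ := (mem_image_iff P p).1 hp
    exact hi i hil p hp
  have nbc : b ≠ c := fun h => by rw [h] at hbc2; exact lt_irrefl _ hbc2
  have obc : Polyline.OctiSeg b c := Or.inr (Or.inl (by rw [hbc]; ring))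
  rcases hab with rfl | ⟨hab, oab⟩ <;> rcases hcd with rfl | ⟨hcd, ocd⟩
  · refine main ⟨1, le_rfl, fun i => if i = 0 then a else c⟩ rfl rfl (by simp) ?_ ?_ ?_ ?_
    · intro i hi
      have : i = 0 := by simp at hi; omega
      subst this
      exact ⟨nbc, obc⟩
    · intro i hi; simp at hi
    · intro i j hi hj; simp at hj; omega
    · intro i hi
      have : i = 0 := by simp at hi; omega
      subst this
      exact fun p hp => Or.inr (Or.inl hp)
  · refine main ⟨2, by norm_num, fun i => if i = 0 then a else if i = 1 then c else d⟩ rfl rfl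
      (by simp) ?_ ?_ ?_ ?_
    · intro i hi
      have : i = 0 ∨ i = 1 := by simp at hi; omega
      rcases this with rfl | rfl
      · exact ⟨nbc, obc⟩
      · exact ⟨fun h => hcd (congrArg Prod.fst h), ocd⟩
    · intro i hi
      have : i = 0 := by simp at hi; omega
      subst this
      exact Or.inr ⟨hbc, hbc2.ne, hcd⟩
    · intro i j hi hj; simp at hj; omega
    · intro i hi
      have : i = 0 ∨ i = 1 := by simp at hi; omega
      rcases this with rfl | rfl
      · exact fun p hp => Or.inr (Or.inl hp)
      · exact fun p hp => Or.inr (Or.inr hp)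
  · refine main ⟨2, by norm_num, fun i => if i = 0 then a else if i = 1 then b else c⟩ rfl rfl
      (by simp) ?_ ?_ ?_ ?_
    · intro i hi
      have : i = 0 ∨ i = 1 := by simp at hi; omega
      rcases this with rfl | rfl
      · exact ⟨fun h => hab (congrArg Prod.fst h), oab⟩
      · exact ⟨nbc, obc⟩
    · intro i hi
      have : i = 0 := by simp at hi; omega
      subst this
      exact Or.inl ⟨hab, hbc, hbc2.ne⟩
    · intro i j hi hj; simp at hj; omega
    · intro i hi
      have : i = 0 ∨ i = 1 := by simp at hi; omega
      rcases this with rfl | rfl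
      · exact fun p hp => Or.inl hp
      · exact fun p hp => Or.inr (Or.inl hp)
  · refine main ⟨3, by norm_num, fun i => if i = 0 then a else if i = 1 then b else
      if i = 2 then c else d⟩ rfl rfl le_rfl ?_ ?_ ?_ ?_
    · intro i hi
      have : i = 0 ∨ i = 1 ∨ i = 2 := by simp at hi; omega
      rcases this with rfl | rfl | rfl
      · exact ⟨fun h => hab (congrArg Prod.fst h), oab⟩
      · exact ⟨nbc, obc⟩
      · exact ⟨fun h => hcd (congrArg Prod.fst h), ocd⟩
    · intro i hi
      have : i = 0 ∨ i = 1 := by simp at hi; omega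
      rcases this with rfl | rfl
      · exact Or.inl ⟨hab, hbc, hbc2.ne⟩
      · exact Or.inr ⟨hbc, hbc2.ne, hcd⟩
    · intro i j hi hj
      have : i = 0 ∧ j = 2 := by simp at hj; omega
      obtain ⟨rfl, rfl⟩ := this
      exact hdis
    · intro i hi
      have : i = 0 ∨ i = 1 ∨ i = 2 := by simp at hi; omega
      rcases this with rfl | rfl | rfl
      · exact fun p hp => Or.inl hp
      · exact fun p hp => Or.inr (Or.inl hp)
      · exact fun p hp => Or.inr (Or.inr hp)

end OctiProof

/-! ### The drawing -/

namespace OctiProof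

open Finset Classical

/-- The slope of the first segment at port `d`, measured away from the vertex: `1` and `-1` for the
forward and backward diagonals, `0` for the horizontal ports (and, as a convention, the vertical
one). -/
noncomputable def kap (d : ℤ) : ℝ := if d = 1 ∨ d = -1 then 1 else if d = 3 then -1 else 0

/-- The vertical direction in which an edge leaves its endvertex on side `b`. -/
noncomputable def sg (b : Bool) : ℝ := if b then -1 else 1

/-- The part of the edge `e` between its endvertex on side `b` and the vertical part, when the
vertices have ordinates `Y`; a single point if the port is vertical. -/
def Stub {V E : Type*} {S : STGraph V E} (C : Coords S) (Y : V → ℝ) (e : E) (b : Bool)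
    (p : ℝ × ℝ) : Prop :=
  (((C.x (S.vt e b) : ℝ) ≤ p.1 ∧ p.1 ≤ C.X e) ∨ ((C.X e : ℝ) ≤ p.1 ∧ p.1 ≤ C.x (S.vt e b))) ∧
  sg b * (p.2 - Y (S.vt e b)) = kap (C.δ e b) * |p.1 - C.x (S.vt e b)|

/-- The vertical part of the edge `e`. -/
def Vert {V E : Type*} {S : STGraph V E} (C : Coords S) (Y : V → ℝ) (e : E)
    (p : ℝ × ℝ) : Prop :=
  p.1 = C.X e ∧ ∀ b, kap (C.δ e b) * |(C.X e : ℝ) - C.x (S.vt e b)| ≤ sg b * (p.2 - Y (S.vt e b))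

theorem kap_abs (d : ℤ) : |kap d| ≤ 1 := by
  unfold kap; split_ifs <;> simp

theorem kap_nonneg {d : ℤ} (h : d ≠ 3) : 0 ≤ kap d := by
  unfold kap; split_ifs <;> simp

theorem kap_zero {d : ℤ} (h0 : d ≠ 0) (hl : -2 ≤ d) (hh : d ≤ 3) (h : kap d = 0) :
    d = 2 ∨ d = -2 := by
  unfold kap at h; split_ifs at h
  · norm_num at h
  · norm_num at h
  · omega

theorem kap_lt {d d' : ℤ} (hl : -2 ≤ d) (hh : d ≤ 3) (h : (0 < d' ∧ d' < d) ∨ (d < d' ∧ d' < 0)) :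
    kap d < kap d' := by
  have : (d = 2 ∧ d' = 1) ∨ (d = 3 ∧ d' = 1) ∨ (d = 3 ∧ d' = 2) ∨ (d = -2 ∧ d' = -1) := by omega
  rcases this with ⟨rfl, rfl⟩ | ⟨rfl, rfl⟩ | ⟨rfl, rfl⟩ | ⟨rfl, rfl⟩ <;> norm_num [kap]

theorem kap_mul_le (d : ℤ) {z B : ℝ} (h : |z| ≤ B) : |kap d * (|z|)| ≤ B := by
  rw [abs_mul, abs_abs]
  have := kap_abs d
  nlinarith [abs_nonneg z, abs_nonneg (kap d)]

theorem sg_abs (b : Bool) (z : ℝ) : |sg b * z| = |z| := by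
  cases b <;> simp [sg]

theorem sg_not (b : Bool) (z : ℝ) : sg (!b) * z = -(sg b * z) := by
  cases b <;> simp [sg]

section

variable {V E : Type*} {S : STGraph V E} {C : Coords S} {Y : V → ℝ} {B : ℝ}

theorem Stub.le {e : E} {b : Bool} {p : ℝ × ℝ} (h : Stub C Y e b p) :
    |p.1 - C.x (S.vt e b)| ≤ |(C.X e : ℝ) - C.x (S.vt e b)| := by
  rcases h.1 with ⟨h1, h2⟩ | ⟨h1, h2⟩
  · rw [abs_of_nonneg (by linarith), abs_of_nonneg (by linarith)]; linarith
  · rw [abs_of_nonpos (by linarith), abs_of_nonpos (by linarith)]; linarith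

theorem Stub.band (hB : ∀ e v, |(C.X e : ℝ) - C.x v| ≤ B) {e : E} {b : Bool} {p : ℝ × ℝ}
    (h : Stub C Y e b p) : |p.2 - Y (S.vt e b)| ≤ B := by
  rw [← sg_abs b, h.2]
  exact kap_mul_le _ (h.le.trans (hB _ _))

theorem Stub.center {e : E} {b : Bool} {p : ℝ × ℝ} (h : Stub C Y e b p)
    (hp : p.1 = C.x (S.vt e b)) : p = (↑(C.x (S.vt e b)), Y (S.vt e b)) := by
  have h2 := h.2
  rw [hp] at h2
  have : p.2 = Y (S.vt e b) := by cases b <;> simp [sg] at h2 <;> linarith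
  exact Prod.ext hp this

theorem Vert.band (hB : ∀ e v, |(C.X e : ℝ) - C.x v| ≤ B) {e : E} {p : ℝ × ℝ}
    (h : Vert C Y e p) : Y (S.src e) - B ≤ p.2 ∧ p.2 ≤ Y (S.tgt e) + B := by
  have h1 := h.2 false
  have h2 := h.2 true
  have k1 := (abs_le.1 (kap_mul_le (C.δ e false) (hB e (S.vt e false)))).1
  have k2 := (abs_le.1 (kap_mul_le (C.δ e true) (hB e (S.vt e true)))).1
  simp only [sg, STGraph.vt] at *
  simp at h1 h2 k1 k2
  constructor <;> linarith

theorem ov_same {e e' : E} {b : Bool} (h : S.vt e b = S.vt e' b) : S.Ov e e' := by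
  have h1 := S.flt e
  have h2 := S.flt e'
  cases b
  · have h : S.src e = S.src e' := h
    exact ⟨by rw [h]; exact h2, by rw [← h]; exact h1⟩
  · have h : S.tgt e = S.tgt e' := h
    exact ⟨by rw [← h]; exact h1, by rw [h]; exact h2⟩

theorem delta_zero (C : Coords S) (e : E) (b : Bool) :
    C.δ e b = 0 ↔ C.X e = C.x (S.vt e b) := by
  have h1 := C.pos e b
  have h2 := C.neg e b
  omega

theorem not_excl (C : Coords S) {e e' : E} {b : Bool} (hv : S.vt e b = S.vt e' (!b))
    (h0 : C.δ e b ≠ 0) (h0' : C.δ e' (!b) ≠ 0) : 0 < kap (C.δ e b) + kap (C.δ e' (!b)) := by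
  have h3 := C.three e e' b hv
  have h3' := C.three e' e (!b) (by simpa using hv.symm)
  have k := kap_nonneg h3
  have k' := kap_nonneg h3'
  by_contra hn
  exact C.excl e e' b hv (kap_zero h0 (C.lo _ _) (C.hi _ _) (by linarith))
    (kap_zero h0' (C.lo _ _) (C.hi _ _) (by linarith))

/-- Two vertices with overlapping horizontal bands coincide. -/
theorem band_eq (hY : ∀ v w, S.f v < S.f w → Y v + (3 * B + 3) ≤ Y w) (hB0 : 0 ≤ B) {v w : V}
    {y : ℝ} (h1 : |y - Y v| ≤ B) (h2 : |y - Y w| ≤ B) : v = w := by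
  rw [abs_le] at h1 h2
  rcases lt_trichotomy (S.f v) (S.f w) with h | h | h
  · have := hY _ _ h; linarith
  · exact S.finj h
  · have := hY _ _ h; linarith

/-- Stubs of distinct edges meet only in a common endvertex: stubs of different vertices lie in disjoint
horizontal bands, and stubs at one vertex leave it through different ports. -/
theorem stub_stub (hB : ∀ e v, |(C.X e : ℝ) - C.x v| ≤ B)
    (hY : ∀ v w, S.f v < S.f w → Y v + (3 * B + 3) ≤ Y w) (hB0 : 0 ≤ B) {e e' : E} {b b' : Bool}
    {p : ℝ × ℝ} (hne : e ≠ e') (h : Stub C Y e b p) (h' : Stub C Y e' b' p) :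
    S.vt e b = S.vt e' b' ∧ p = (↑(C.x (S.vt e b)), Y (S.vt e b)) := by
  have hv := band_eq hY hB0 (h.band hB) (h'.band hB)
  refine ⟨hv, h.center ?_⟩
  by_contra hp
  have h1 := h.1
  have h1' := h'.1
  have h2 := h.2
  have h2' := h'.2
  rw [← hv] at h1' h2'
  have hd : 0 < |p.1 - C.x (S.vt e b)| := abs_pos.2 (sub_ne_zero.2 hp)
  rcases Bool.eq_or_eq_not b' b with rfl | rfl
  · have hk : kap (C.δ e b') = kap (C.δ e' b') := by
      rw [h2] at h2'; exact mul_right_cancel₀ hd.ne' h2'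
    have hX := C.inj e e' (ov_same hv) hne
    have m := C.mono e e' b' hv
    have m' := C.mono e' e b' hv.symm
    have q := C.pos e b'
    have q' := C.pos e' b'
    have r := C.neg e b'
    have r' := C.neg e' b'
    rw [← hv] at q' r'
    have side : (C.x (S.vt e b') < C.X e ∧ C.x (S.vt e b') < C.X e') ∨
        (C.X e < C.x (S.vt e b') ∧ C.X e' < C.x (S.vt e b')) := by
      have : (((C.x (S.vt e b') : ℝ) < C.X e ∧ (C.x (S.vt e b') : ℝ) < C.X e') ∨
        ((C.X e : ℝ) < C.x (S.vt e b') ∧ (C.X e' : ℝ) < C.x (S.vt e b'))) := by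
        rcases lt_or_gt_of_ne hp with hp | hp
        · right
          rcases h1 with h1 | h1 <;> rcases h1' with h1' | h1' <;> constructor <;> linarith
        · left
          rcases h1 with h1 | h1 <;> rcases h1' with h1' | h1' <;> constructor <;> linarith
      exact_mod_cast this
    rcases lt_or_gt_of_ne hX with hlt | hlt
    · rcases side with s | s
      · have := kap_lt (C.lo e' b') (C.hi e' b') (d' := C.δ e b') (Or.inl (by omega)); linarith
      · have := kap_lt (C.lo e b') (C.hi e b') (d' := C.δ e' b') (Or.inr (by omega)); linarith
    · rcases side with s | s
      · have := kap_lt (C.lo e b') (C.hi e b') (d' := C.δ e' b') (Or.inl (by omega)); linarith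
      · have := kap_lt (C.lo e' b') (C.hi e' b') (d' := C.δ e b') (Or.inr (by omega)); linarith
  · rw [sg_not] at h2'
    have n0 : C.δ e b ≠ 0 := fun h0 => by
      rw [delta_zero] at h0
      rw [h0] at h1
      apply hp
      rcases h1 with h1 | h1 <;> linarith
    have n0' : C.δ e' (!b) ≠ 0 := fun h0 => by
      rw [delta_zero, ← hv] at h0
      rw [h0] at h1'
      apply hp
      rcases h1' with h1 | h1 <;> linarith
    have := not_excl C hv n0 n0'
    nlinarith

/-- A stub of `e` meets the vertical part of another edge `e'` only in a common endvertex: at the level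
of that vertex, either `e'` passes by on one side of all the edges at the vertex, or it is incident
to the vertex and its vertical part stays strictly on one side of the stub of `e` (unless they meet in
the vertex). -/
theorem stub_vert (hB : ∀ e v, |(C.X e : ℝ) - C.x v| ≤ B)
    (hY : ∀ v w, S.f v < S.f w → Y v + (3 * B + 3) ≤ Y w) (hB0 : 0 ≤ B) {e e' : E} {b : Bool}
    {p : ℝ × ℝ} (hne : e ≠ e') (h : Stub C Y e b p) (h' : Vert C Y e' p) :
    (∃ b', S.vt e b = S.vt e' b') ∧ p = (↑(C.x (S.vt e b)), Y (S.vt e b)) := by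
  have band := abs_le.1 (h.band hB)
  have band' := h'.band hB
  have h1 := h.1
  have hp := h'.1
  rw [hp] at h1
  by_cases hex : ∃ b', S.vt e b = S.vt e' b'
  · refine ⟨hex, h.center ?_⟩
    by_contra hc
    rw [hp] at hc
    obtain ⟨b', hv⟩ := hex
    have h2 := h.2
    have h2' := h'.2 b'
    rw [← hv] at h2'
    rw [hp] at h2
    have hd : 0 < |(C.X e' : ℝ) - C.x (S.vt e b)| := abs_pos.2 (sub_ne_zero.2 hc)
    have h1i : (C.x (S.vt e b) ≤ C.X e' ∧ C.X e' ≤ C.X e) ∨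
      (C.X e ≤ C.X e' ∧ C.X e' ≤ C.x (S.vt e b)) := by exact_mod_cast h1
    have hci : C.X e' ≠ C.x (S.vt e b) := by exact_mod_cast hc
    rcases Bool.eq_or_eq_not b' b with rfl | rfl
    · rw [h2] at h2'
      have hk : kap (C.δ e' b') ≤ kap (C.δ e b') := le_of_mul_le_mul_right h2' hd
      have hX := C.inj e e' (ov_same hv) hne
      have m := C.mono e e' b' hv
      have m' := C.mono e' e b' hv.symm
      have q' := C.pos e' b'
      have r' := C.neg e' b'
      rw [← hv] at q' r'
      have := kap_lt (C.lo e b') (C.hi e b') (d' := C.δ e' b') (by omega)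
      linarith
    · rw [sg_not] at h2'
      have n0' : C.δ e' (!b) ≠ 0 := fun h0 => by
        rw [delta_zero, ← hv] at h0
        exact hci h0
      have n0 : C.δ e b ≠ 0 := fun h0 => by
        rw [delta_zero] at h0
        omega
      have := not_excl C hv n0 n0'
      nlinarith
  · exfalso
    push Not at hex
    have n1 : S.f (S.src e') ≠ S.f (S.vt e b) := fun h => hex false (S.finj h).symm
    have n2 : S.f (S.tgt e') ≠ S.f (S.vt e b) := fun h => hex true (S.finj h).symm
    rcases lt_or_gt_of_ne n1 with h3 | h3
    · rcases lt_or_gt_of_ne n2 with h4 | h4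
      · have := hY _ _ h4; linarith [band.1]
      · have pass : S.Pass e' (S.vt e b) := ⟨h3, h4⟩
        have a1 := C.pass_ne _ _ pass
        have a2 := C.pass_lt _ _ pass e b rfl
        have a3 := C.pass_gt _ _ pass e b rfl
        have h1i : (C.x (S.vt e b) ≤ C.X e' ∧ C.X e' ≤ C.X e) ∨
          (C.X e ≤ C.X e' ∧ C.X e' ≤ C.x (S.vt e b)) := by exact_mod_cast h1
        omega
    · have := hY _ _ h3; linarith [band.2]

/-- Vertical parts of non-overlapping edges meet only if both use the vertical port of a common
endvertex. -/
theorem vert_vert (hB : ∀ e v, |(C.X e : ℝ) - C.x v| ≤ B)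
    (hY : ∀ v w, S.f v < S.f w → Y v + (3 * B + 3) ≤ Y w) (hB0 : 0 ≤ B) {e e' : E}
    {p : ℝ × ℝ} (hle : S.f (S.tgt e) ≤ S.f (S.src e')) (h : Vert C Y e p) (h' : Vert C Y e' p) :
    S.vt e true = S.vt e' false ∧ p = (↑(C.x (S.vt e true)), Y (S.vt e true)) := by
  have b1 := h.band hB
  have b2 := h'.band hB
  rcases hle.lt_or_eq with hlt | heq
  · have := hY _ _ hlt; linarith
  have hv : S.vt e true = S.vt e' (!true) := S.finj heq
  refine ⟨hv, ?_⟩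
  have h1 := h.2 true
  have h2 := h'.2 (!true)
  have hX : (C.X e : ℝ) = C.X e' := h.1.symm.trans h'.1
  rw [← hv, sg_not, ← hX] at h2
  have hXi : C.X e = C.X e' := by exact_mod_cast hX
  by_cases h0 : C.X e = C.x (S.vt e true)
  · refine Prod.ext (by rw [h.1, h0]) ?_
    rw [h0] at h1 h2
    simp only [sub_self, abs_zero, mul_zero, sg] at h1 h2
    simp at h1 h2
    exact le_antisymm (by linarith) (by linarith)
  · have := not_excl C hv (fun h => h0 ((delta_zero _ _ _).1 h))
      (fun h => h0 (by rw [hv, hXi]; exact (delta_zero _ _ _).1 h))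
    have hd : 0 < |(C.X e : ℝ) - C.x (S.vt e true)| :=
      abs_pos.2 (sub_ne_zero.2 (by exact_mod_cast h0))
    nlinarith

/-- The image of the edge `e`. -/
def OnEdge (C : Coords S) (Y : V → ℝ) (e : E) (p : ℝ × ℝ) : Prop :=
  (∃ b, Stub C Y e b p) ∨ Vert C Y e p

theorem edge_edge (hB : ∀ e v, |(C.X e : ℝ) - C.x v| ≤ B)
    (hY : ∀ v w, S.f v < S.f w → Y v + (3 * B + 3) ≤ Y w) (hB0 : 0 ≤ B) {e e' : E}
    {p : ℝ × ℝ} (hne : e ≠ e') (h : OnEdge C Y e p) (h' : OnEdge C Y e' p) :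
    ∃ b b', S.vt e b = S.vt e' b' ∧ p = (↑(C.x (S.vt e b)), Y (S.vt e b)) := by
  rcases h with ⟨b, h⟩ | h <;> rcases h' with ⟨b', h'⟩ | h'
  · exact ⟨b, b', stub_stub hB hY hB0 hne h h'⟩
  · obtain ⟨⟨b', h1⟩, h2⟩ := stub_vert hB hY hB0 hne h h'
    exact ⟨b, b', h1, h2⟩
  · obtain ⟨⟨b, h1⟩, h2⟩ := stub_vert hB hY hB0 hne.symm h' h
    exact ⟨b, b', h1.symm, by rw [← h1]; exact h2⟩
  · by_cases h1 : S.f (S.tgt e) ≤ S.f (S.src e')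
    · exact ⟨true, false, vert_vert hB hY hB0 h1 h h'⟩
    by_cases h2 : S.f (S.tgt e') ≤ S.f (S.src e)
    · obtain ⟨h3, h4⟩ := vert_vert hB hY hB0 h2 h' h
      exact ⟨false, true, h3.symm, by rw [← h3]; exact h4⟩
    · have := C.inj e e' ⟨not_le.1 h2, not_le.1 h1⟩ hne
      have hX : (C.X e : ℝ) = C.X e' := h.1.symm.trans h'.1
      exact absurd (by exact_mod_cast hX) this

theorem edge_vertex (hB : ∀ e v, |(C.X e : ℝ) - C.x v| ≤ B)
    (hY : ∀ v w, S.f v < S.f w → Y v + (3 * B + 3) ≤ Y w) (hB0 : 0 ≤ B) {e : E} {w : V}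
    (h : OnEdge C Y e (↑(C.x w), Y w)) : w = S.src e ∨ w = S.tgt e := by
  rcases h with ⟨b, h⟩ | h
  · have := band_eq hY hB0 (h.band hB) (w := w) (by simpa using hB0)
    rw [← this]
    cases b
    · exact Or.inl rfl
    · exact Or.inr rfl
  · have band := h.band hB
    simp only at band
    rcases lt_trichotomy (S.f w) (S.f (S.src e)) with h1 | h1 | h1
    · have := hY _ _ h1; linarith
    · exact Or.inl (S.finj h1)
    · rcases lt_trichotomy (S.f w) (S.f (S.tgt e)) with h2 | h2 | h2
      · have := C.pass_ne e w ⟨h1, h2⟩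
        have h3 : (C.x w : ℝ) = C.X e := h.1
        exact absurd (by exact_mod_cast h3.symm) this
      · exact Or.inr (S.finj h2)
      · have := hY _ _ h2; linarith

/-- The bend of `e` at the end of its stub on side `b`. -/
noncomputable def bendPt (C : Coords S) (Y : V → ℝ) (e : E) (b : Bool) : ℝ × ℝ :=
  (C.X e, Y (S.vt e b) + sg b * (kap (C.δ e b) * |(C.X e : ℝ) - C.x (S.vt e b)|))

theorem stub_of_mem {e : E} {b : Bool} {p : ℝ × ℝ}
    (h : p ∈ segment ℝ ((C.x (S.vt e b) : ℝ), Y (S.vt e b)) (bendPt C Y e b)) :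
    Stub C Y e b p := by
  rw [segment_eq_image'] at h
  obtain ⟨t, ⟨h0, h1⟩, rfl⟩ := h
  have hs : sg b * sg b = 1 := by cases b <;> simp [sg]
  simp only [Stub, bendPt, Prod.fst_add, Prod.snd_add, Prod.smul_fst, Prod.smul_snd, Prod.fst_sub,
    Prod.snd_sub, smul_eq_mul, add_sub_cancel_left, abs_mul, abs_of_nonneg h0]
  constructor
  · rcases le_total (C.x (S.vt e b) : ℝ) (C.X e) with h | h
    · left; constructor <;> nlinarith
    · right; constructor <;> nlinarith
  · linear_combination (t * (kap (C.δ e b) * |(C.X e : ℝ) - C.x (S.vt e b)|)) * hs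

theorem bend_lt (hB : ∀ e v, |(C.X e : ℝ) - C.x v| ≤ B)
    (hY : ∀ v w, S.f v < S.f w → Y v + (3 * B + 3) ≤ Y w) (hB0 : 0 ≤ B) (e : E) :
    (bendPt C Y e false).2 < (bendPt C Y e true).2 := by
  have k1 := (abs_le.1 (kap_mul_le (C.δ e false) (hB e (S.vt e false)))).2
  have k2 := (abs_le.1 (kap_mul_le (C.δ e true) (hB e (S.vt e true)))).2
  have := hY (S.vt e false) (S.vt e true) (S.flt e)
  simp only [bendPt, sg]
  simp
  linarith

theorem vert_of_mem (hB : ∀ e v, |(C.X e : ℝ) - C.x v| ≤ B)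
    (hY : ∀ v w, S.f v < S.f w → Y v + (3 * B + 3) ≤ Y w) (hB0 : 0 ≤ B) {e : E} {p : ℝ × ℝ}
    (h : p ∈ segment ℝ (bendPt C Y e false) (bendPt C Y e true)) : Vert C Y e p := by
  have hlt := bend_lt hB hY hB0 e
  rw [segment_eq_image'] at h
  obtain ⟨t, ⟨h0, h1⟩, rfl⟩ := h
  have g1 : (bendPt C Y e false).2 ≤ (bendPt C Y e false).2 +
    t * ((bendPt C Y e true).2 - (bendPt C Y e false).2) := by nlinarith
  have g2 : (bendPt C Y e false).2 +
    t * ((bendPt C Y e true).2 - (bendPt C Y e false).2) ≤ (bendPt C Y e true).2 := by nlinarith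
  refine ⟨by simp [bendPt], fun b => ?_⟩
  simp only [Prod.snd_add, Prod.smul_snd, Prod.snd_sub, smul_eq_mul]
  generalize (bendPt C Y e false).2 +
    t * ((bendPt C Y e true).2 - (bendPt C Y e false).2) = y at *
  cases b
  · simp [bendPt, sg] at g1 ⊢; linarith
  · simp [bendPt, sg] at g2 ⊢; linarith

theorem octi_stub (C : Coords S) (Y : V → ℝ) (e : E) (b : Bool) :
    ((C.x (S.vt e b) : ℝ), Y (S.vt e b)) = bendPt C Y e b ∨
    ((C.x (S.vt e b) : ℝ) ≠ (bendPt C Y e b).1 ∧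
      Polyline.OctiSeg ((C.x (S.vt e b) : ℝ), Y (S.vt e b)) (bendPt C Y e b)) := by
  by_cases h : C.X e = C.x (S.vt e b)
  · left; simp [bendPt, h]
  · right
    refine ⟨fun h' => h (by simp only [bendPt] at h'; exact_mod_cast h'.symm), ?_⟩
    simp only [Polyline.OctiSeg, bendPt, add_sub_cancel_left]
    have hk : kap (C.δ e b) = 0 ∨ kap (C.δ e b) = 1 ∨ kap (C.δ e b) = -1 := by
      unfold kap; split_ifs <;> simp
    have hs : sg b = 1 ∨ sg b = -1 := by cases b <;> simp [sg]
    rcases hk with hk | hk | hk <;> rcases hs with hs | hs <;>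
      rcases abs_choice ((C.X e : ℝ) - C.x (S.vt e b)) with ha | ha <;> rw [hk, hs, ha] <;> simp

theorem exists_edge_poly (hB : ∀ e v, |(C.X e : ℝ) - C.x v| ≤ B)
    (hY : ∀ v w, S.f v < S.f w → Y v + (3 * B + 3) ≤ Y w) (hB0 : 0 ≤ B) (e : E) :
    ∃ P : Polyline, P.pt 0 = (↑(C.x (S.src e)), Y (S.src e)) ∧
      P.pt P.len = (↑(C.x (S.tgt e)), Y (S.tgt e)) ∧ P.len ≤ 3 ∧ P.Octilinear ∧ P.Simple ∧
      ∀ p ∈ P.image, OnEdge C Y e p := by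
  obtain ⟨P, h0, h1, h2, h3, h4, h5⟩ := exists_poly (↑(C.x (S.vt e false)), Y (S.vt e false))
    (bendPt C Y e false) (bendPt C Y e true) (↑(C.x (S.vt e true)), Y (S.vt e true)) rfl
    (bend_lt hB hY hB0 e) (octi_stub C Y e false)
    (by
      rcases octi_stub C Y e true with h | ⟨h, h'⟩
      · exact Or.inl h.symm
      · refine Or.inr ⟨h.symm, ?_⟩
        simp only [Polyline.OctiSeg] at h' ⊢
        rcases h' with h | h | h | h
        · left; linarith
        · right; left; linarith
        · right; right; left; linarith
        · right; right; right; linarith)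
    (by
      intro p h1 h2
      rw [segment_symm] at h2
      have := band_eq hY hB0 ((stub_of_mem h1).band hB) ((stub_of_mem h2).band hB)
      have h3 := S.flt e
      have h4 : S.src e = S.tgt e := this
      rw [h4] at h3
      exact lt_irrefl _ h3)
  refine ⟨P, h0, h1, h2, h3, h4, fun p hp => ?_⟩
  rcases h5 p hp with h | h | h
  · exact Or.inl ⟨false, stub_of_mem h⟩
  · exact Or.inr (vert_of_mem hB hY hB0 h)
  · rw [segment_symm] at h
    exact Or.inl ⟨true, stub_of_mem h⟩

end

/-- The drawing defined by `Coords`: if all abscissas differ by at most `B`, the vertex `v` is placed at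
`(x v, (3 * B + 3) * f v)`, and each edge consists of a stub, a vertical part and a stub.  Bends stay
within height `B` of the corresponding vertex, so the bands of different vertices are disjoint. -/
theorem exists_drawing {V E : Type*} [Finite V] [Finite E] (S : STGraph V E) (C : Coords S) :
    ∃ (pos : V → ℤ × ℤ) (poly : E → Polyline), Function.Injective pos ∧
      (∀ e, (poly e).pt 0 = toR (pos (S.src e)) ∧ (poly e).pt (poly e).len = toR (pos (S.tgt e)) ∧
        (poly e).len ≤ 3 ∧ (poly e).Octilinear ∧ (poly e).Simple) ∧
      (∀ e w, toR (pos w) ∈ (poly e).image → w = S.src e ∨ w = S.tgt e) ∧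
      (∀ e e' p, e ≠ e' → p ∈ (poly e).image → p ∈ (poly e').image →
        ∃ v, p = toR (pos v) ∧ (v = S.src e ∨ v = S.tgt e) ∧ (v = S.src e' ∨ v = S.tgt e')) := by
  obtain ⟨B, hB⟩ := (Set.finite_range (fun q : E × V => |C.X q.1 - C.x q.2|)).bddAbove
  have hBi : ∀ e v, |C.X e - C.x v| ≤ max B 0 := fun e v =>
    (hB ⟨(e, v), rfl⟩).trans (le_max_left _ _)
  have hB0i : 0 ≤ max B 0 := le_max_right _ _
  generalize max B 0 = B at *
  let Yi : V → ℤ := fun v => (3 * B + 3) * S.f v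
  let Y : V → ℝ := fun v => (Yi v : ℝ)
  have hB0 : (0 : ℝ) ≤ B := by exact_mod_cast hB0i
  have hB : ∀ e v, |(C.X e : ℝ) - C.x v| ≤ (B : ℝ) := fun e v => by exact_mod_cast hBi e v
  have hY : ∀ v w, S.f v < S.f w → Y v + (3 * (B : ℝ) + 3) ≤ Y w := by
    intro v w h
    have h' : (S.f v : ℤ) + 1 ≤ S.f w := by exact_mod_cast h
    have : Yi v + (3 * B + 3) ≤ Yi w := by simp only [Yi]; nlinarith
    simp only [Y]; exact_mod_cast this
  choose poly h0 h1 h2 h3 h4 h5 using exists_edge_poly hB hY hB0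
  have end_or : ∀ e b, S.vt e b = S.src e ∨ S.vt e b = S.tgt e := by
    intro e b
    cases b
    · exact Or.inl rfl
    · exact Or.inr rfl
  refine ⟨fun v => (C.x v, Yi v), poly, ?_, fun e => ⟨h0 e, h1 e, h2 e, h3 e, h4 e⟩, ?_, ?_⟩
  · intro v w h
    have h : Y v = Y w := by exact congrArg Int.cast (congrArg Prod.snd h)
    exact band_eq hY hB0 (y := Y v) (by simpa using hB0) (by simpa [h] using hB0)
  · exact fun e w h => edge_vertex hB hY hB0 (h5 e _ h)
  · intro e e' p hne hp hp'
    obtain ⟨b, b', h, hq⟩ := edge_edge hB hY hB0 hne (h5 e p hp) (h5 e' p hp')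
    exact ⟨S.vt e b, hq, end_or e b, by rw [h]; exact end_or e' b'⟩

end OctiProof

/-! ### Assembly -/

namespace OctiProof

open Finset Classical

theorem exists_adj {V : Type*} [Fintype V] {G : SimpleGraph V} (h3 : Triconnected G) :
    ∃ a b, G.Adj a b := by
  have hc := h3.2 ∅ (by simp)
  obtain ⟨a, b, hab⟩ := Fintype.exists_pair_of_one_lt_card (show 1 < Fintype.card V by
    have := h3.1; omega)
  obtain ⟨p⟩ := hc.preconnected ⟨a, by simp⟩ ⟨b, by simp⟩
  cases p with
  | nil => exact absurd rfl hab
  | cons h q => exact ⟨_, _, h⟩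

/-- A planar triconnected graph has a bipolar orientation whose pole edge carries the parity data. -/
theorem exists_stGraph {V : Type*} [Fintype V] (G : SimpleGraph V) (h3 : Triconnected G)
    (hp : GraphPlanar G) : ∃ S : STGraph V G.edgeSet, (∀ e, e.1 = s(S.src e, S.tgt e)) ∧
      Nonempty (Parity S.src S.tgt S.e0) := by
  obtain ⟨a, b, hab⟩ := exists_adj h3
  obtain ⟨e0, hpar⟩ := exists_parity G hp ⟨⟨s(a, b), hab⟩⟩
  obtain ⟨⟨s, t⟩, hst⟩ := Quot.exists_rep e0.1
  have hst : e0.1 = s(s, t) := hst.symm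
  have hadj : G.Adj s t := by have := e0.2; rw [hst] at this; exact this
  obtain ⟨f, finj, fst, fin, fout⟩ := exists_st_numbering G h3.2 s t hadj
  have hor : ∀ e : G.edgeSet, ∃ u v, e.1 = s(u, v) ∧ f u < f v := by
    rintro ⟨e, he⟩
    induction e using Sym2.ind with
    | _ u v =>
      rcases lt_trichotomy (f u) (f v) with h | h | h
      · exact ⟨u, v, rfl, h⟩
      · exact absurd (finj h) (G.ne_of_adj he)
      · exact ⟨v, u, Sym2.eq_swap, h⟩
  choose src tgt hst' hlt using hor
  have uniq : ∀ (e : G.edgeSet) u v, e.1 = s(u, v) → f u < f v → src e = u ∧ tgt e = v := by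
    intro e u v he h
    have h1 := hlt e
    rw [hst' e, Sym2.eq_iff] at he
    rcases he with he | ⟨h2, h3⟩
    · exact he
    · rw [h2, h3] at h1; omega
  have hlt0 : f s < f t := by
    rcases (fst t).1.lt_or_eq with h | h
    · exact h
    · exact absurd (finj h) hadj.ne
  refine ⟨⟨src, tgt, f, s, t, e0, finj, hlt, fun v => (fst v).1, fun v => (fst v).2,
    (uniq e0 s t hst hlt0).1, (uniq e0 s t hst hlt0).2, ?_, ?_⟩, hst', hpar src tgt hst'⟩
  · intro v hv
    obtain ⟨w, hw, hwv⟩ := fin v hv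
    exact ⟨⟨s(w, v), hw.symm⟩, (uniq _ w v rfl hwv).2⟩
  · intro v hv
    obtain ⟨w, hw, hwv⟩ := fout v hv
    exact ⟨⟨s(v, w), hw⟩, (uniq _ v w rfl hwv).1⟩

theorem degree_le {V : Type*} [Fintype V] {G : SimpleGraph V} (hd : MaxDegLE G 6)
    (S : STGraph V G.edgeSet) (hS : ∀ e, e.1 = s(S.src e, S.tgt e)) (v : V) :
    (univ.filter (fun e => S.src e = v)).card + (univ.filter (fun e => S.tgt e = v)).card ≤ 6 := by
  have hne : ∀ e, S.src e ≠ S.tgt e := fun e h => by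
    have := S.flt e; rw [h] at this; exact lt_irrefl _ this
  rw [← Finset.card_union_of_disjoint (by
    rw [Finset.disjoint_left]
    intro e h1 h2
    simp only [Finset.mem_filter, Finset.mem_univ, true_and] at h1 h2
    exact hne e (h1.trans h2.symm))]
  refine le_trans ?_ (hd v)
  rw [Set.ncard_eq_toFinset_card']
  -- an edge at `v` is sent to its other endvertex
  refine Finset.card_le_card_of_injOn (fun e => if S.src e = v then S.tgt e else S.src e) ?_ ?_
  · intro e he
    have hadj : G.Adj (S.src e) (S.tgt e) := by have := e.2; rw [hS e] at this; exact this
    simp only [Finset.coe_union, Finset.coe_filter, Finset.mem_univ, true_and, Set.mem_union,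
      Set.mem_ofPred_eq] at he
    simp only [Set.coe_toFinset, SimpleGraph.mem_neighborSet]
    split_ifs with h
    · rw [← h]; exact hadj
    · rw [← he.resolve_left h]; exact hadj.symm
  · intro e he e' he' h
    simp only [Finset.coe_union, Finset.coe_filter, Finset.mem_univ, true_and, Set.mem_union,
      Set.mem_ofPred_eq] at he he'
    have key : ∀ e : G.edgeSet, (S.src e = v ∨ S.tgt e = v) →
        e.1 = s(v, if S.src e = v then S.tgt e else S.src e) := by
      intro e he
      split_ifs with h
      · rw [hS e, h]
      · rw [hS e, he.resolve_left h, Sym2.eq_swap]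
    simp only at h
    exact Subtype.ext (by rw [key e he, key e' he', h])

end OctiProof

/-- Every triconnected planar simple graph with maximum degree at most `6`
admits a planar octilinear drawing in which every edge has at most two bends. -/
theorem octilinear_two_bends_of_triconnected_deg6 {V : Type*} [Fintype V]
    (G : SimpleGraph V) (h3 : Triconnected G) (hp : GraphPlanar G) (hd : MaxDegLE G 6) :
    ∃ D : OctiDrawing G, D.IsPlanar ∧ ∀ e ∈ G.edgeSet, (D.poly e).bends ≤ 2 := by
  classical
  obtain ⟨S, hS, ⟨P⟩⟩ := OctiProof.exists_stGraph G h3 hp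
  obtain ⟨O⟩ := OctiProof.exists_edgeOrder S P
  obtain ⟨C⟩ := OctiProof.exists_coords S O (fun v => by
    convert OctiProof.degree_le hd S hS v)
  obtain ⟨pos, poly, hinj, hpoly, hvert, hedge⟩ := OctiProof.exists_drawing S C
  -- the polyline assigned to non-edges is irrelevant
  let Q : Sym2 V → Polyline := fun e => if h : e ∈ G.edgeSet then poly ⟨e, h⟩ else
    ⟨1, le_rfl, fun _ => 0⟩
  have hQ : ∀ e (h : e ∈ G.edgeSet), Q e = poly ⟨e, h⟩ := fun e h => dif_pos h
  have hends : ∀ e : G.edgeSet, ∀ u v, e.1 = s(u, v) →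
      (S.src e = u ∧ S.tgt e = v) ∨ (S.src e = v ∧ S.tgt e = u) := by
    intro e u v h
    rw [hS e, Sym2.eq_iff] at h
    exact h
  have hpt : ∀ u v, G.Adj u v →
      ({(Q s(u, v)).pt 0, (Q s(u, v)).pt (Q s(u, v)).len} : Set (ℝ × ℝ)) =
        {toR (pos u), toR (pos v)} := by
    intro u v h
    rw [hQ s(u, v) h, (hpoly _).1, (hpoly _).2.1]
    rcases hends ⟨s(u, v), h⟩ u v rfl with ⟨h1, h2⟩ | ⟨h1, h2⟩
    · rw [h1, h2]
    · rw [h1, h2, Set.pair_comm]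
  refine ⟨⟨pos, hinj, Q, hpt, fun e he => by rw [hQ e he]; exact (hpoly _).2.2.2.1⟩,
    ⟨?_, ?_, ?_⟩, ?_⟩
  · intro e he
    simp only [hQ e he]
    exact (hpoly _).2.2.2.2
  · intro u v h
    apply Set.Subset.antisymm
    · rintro p ⟨hp, w, rfl⟩
      simp only [hQ s(u, v) h] at hp
      have hw := hvert ⟨s(u, v), h⟩ w hp
      rcases hends ⟨s(u, v), h⟩ u v rfl with ⟨h1, h2⟩ | ⟨h1, h2⟩ <;> rw [h1, h2] at hw <;>
        rcases hw with rfl | rfl <;> simp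
    · rw [← hpt u v h]
      rintro p (hp | hp)
      · refine ⟨by rw [hp]; exact OctiProof.pt_mem_image _ (Nat.zero_le _), ?_⟩
        rw [hp, hQ s(u, v) h, (hpoly _).1]
        exact ⟨_, rfl⟩
      · rw [Set.mem_singleton_iff] at hp
        refine ⟨by rw [hp]; exact OctiProof.pt_mem_image _ le_rfl, ?_⟩
        rw [hp, hQ s(u, v) h, (hpoly _).2.1]
        exact ⟨_, rfl⟩
  · rintro e he e' he' hne p ⟨hp, hp'⟩
    simp only [hQ e he] at hp
    simp only [hQ e' he'] at hp'
    obtain ⟨v, hv, h1, h2⟩ := hedge ⟨e, he⟩ ⟨e', he'⟩ p (fun h => hne (congrArg Subtype.val h)) hp hp'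
    have hmem : ∀ e : G.edgeSet, (v = S.src e ∨ v = S.tgt e) → v ∈ e.1 := by
      intro e h
      rw [hS e, Sym2.mem_iff]
      exact h
    exact ⟨v, ⟨hmem ⟨e, he⟩ h1, hmem ⟨e', he'⟩ h2⟩, hv.symm⟩
  · intro e he
    simp only [hQ e he, Polyline.bends]
    have := (hpoly ⟨e, he⟩).2.2.1
    omega
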